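/- Key limit for the positive-exponential part (display (NdTp1)): lim_{t→0⁺} ∫₀^∞ ((e^{−t^{1/Y}·v} − 1)/t^{1/Y})·( P((Z + γ̃_t)⁺ + Ũ ≥ v) − C·(M^Y + (G+1)^Y)/(Y·v^Y) ) dv = −∫₀^∞ v·( P(Z⁺ + Ũ ≥ v) − C·M^Y/(Y·v^Y) − C·(G+1)^Y/(Y·v^Y) ) dv. -/

import Mathlib

open MeasureTheory ProbabilityTheory Filter Topology Asymptotics Set

/-!
The characteristic function `exp (B u ^ Y)` of the stable law on `u ≥ 0` extends holomorphically to
a sector, so the contour of Fourier inversion can be rotated off the real axis, where the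
oscillating factor decays exponentially. Expanding `exp (B u ^ Y)` to first order there gives the
density `C x ^ (-Y - 1) + O(x ^ (-2 Y - 1))`, hence the tail `(C / Y) v ^ (-Y) + O(v ^ (-Y - 1))`.

The variable `(U - V + γ)⁺ + (M - 1) U + (G + 1) V` is the maximum of `M U + G V + γ` and
`(M - 1) U + (G + 1) V`. Two large jumps cost `O(v ^ (-2 Y))`, so it exceeds a large `v` essentially
because of `U` alone, with slope `M`, or of `V` alone, with slope `G + 1`. This gives the tail
`C (M ^ Y + (G + 1) ^ Y) / (Y v ^ Y) + O(v ^ (-Y - 1))` for each fixed `γ`. The tail is monotone in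
`γ`, so the cases `γ = -1` and `γ = 1` dominate all small `γ`, and `v * O(v ^ (-Y - 1))` is
integrable at infinity because `1 < Y`: the limit is dominated convergence.
-/

lemma norm_exp_sub_one_le_of_re_nonpos {w : ℂ} (hw : w.re ≤ 0) :
    ‖Complex.exp w - 1‖ ≤ 2 * ‖w‖ := by
  rcases le_or_gt ‖w‖ 1 with h | h
  · exact Complex.norm_exp_sub_one_le h
  · have h_exp : ‖Complex.exp w‖ ≤ 1 := by
      rw [Complex.norm_exp]
      exact Real.exp_le_one_iff.mpr hw
    linarith [norm_sub_le (Complex.exp w) 1, norm_one (α := ℂ)]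

lemma norm_exp_sub_one_sub_id_le_of_re_nonpos {w : ℂ} (hw : w.re ≤ 0) :
    ‖Complex.exp w - 1 - w‖ ≤ 3 * ‖w‖ ^ 2 := by
  rcases le_or_gt ‖w‖ 1 with h | h
  · linarith [Complex.norm_exp_sub_one_sub_id_le h, sq_nonneg ‖w‖]
  · nlinarith [norm_sub_le (Complex.exp w - 1) w, norm_exp_sub_one_le_of_re_nonpos hw]

section RayRotation

lemma integral_add_mul_I_eq {f : ℂ → ℂ} {g : ℝ → ℝ} {a b : ℝ}
    (hf : DifferentiableOn ℂ f (univ ×ℂ uIcc a b)) (hg : Integrable g)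
    (hg_top : Tendsto g atTop (𝓝 0)) (hg_bot : Tendsto g atBot (𝓝 0))
    (hfg : ∀ s : ℝ, ∀ τ ∈ uIcc a b, ‖f (s + τ * Complex.I)‖ ≤ g s) :
    ∫ s : ℝ, f (s + a * Complex.I) = ∫ s : ℝ, f (s + b * Complex.I) := by
  have h_horizontal : ∀ τ ∈ uIcc a b,
      Tendsto (fun T : ℝ => ∫ s in (-T)..T, f (s + τ * Complex.I)) atTop
        (𝓝 (∫ s : ℝ, f (s + τ * Complex.I))) := fun τ hτ => by
    have h_cont : Continuous fun s : ℝ => f (s + τ * Complex.I) :=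
      hf.continuousOn.comp_continuous (by fun_prop) fun s => by
        simpa [Complex.mem_reProdIm] using hτ
    exact intervalIntegral_tendsto_integral
      (hg.mono' h_cont.aestronglyMeasurable (.of_forall fun s => hfg s τ hτ))
      tendsto_neg_atTop_atBot tendsto_id
  have h_vertical : ∀ u : ℝ → ℝ, Tendsto (fun T => g (u T)) atTop (𝓝 0) →
      Tendsto (fun T : ℝ => ∫ y in a..b, f (u T + y * Complex.I)) atTop (𝓝 0) := fun u hu =>
    squeeze_zero_norm (fun T => intervalIntegral.norm_integral_le_of_norm_le_const
      fun y hy => hfg (u T) y (uIoc_subset_uIcc hy)) (by simpa using hu.mul_const |b - a|)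
  have h_rect : ∀ T : ℝ,
      (∫ s in (-T)..T, f (s + a * Complex.I)) - (∫ s in (-T)..T, f (s + b * Complex.I)) +
        Complex.I • (∫ y in a..b, f (T + y * Complex.I)) -
        Complex.I • (∫ y in a..b, f ((-T : ℝ) + y * Complex.I)) = 0 := fun T => by
    simpa using Complex.integral_boundary_rect_eq_zero_of_differentiableOn f ⟨-T, a⟩ ⟨T, b⟩
      (hf.mono fun z hz => ⟨mem_univ _, hz.2⟩)
  have h_lim := (((h_horizontal a left_mem_uIcc).sub (h_horizontal b right_mem_uIcc)).add
    ((h_vertical id hg_top).const_smul Complex.I)).sub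
    ((h_vertical Neg.neg (hg_bot.comp tendsto_neg_atTop_atBot)).const_smul Complex.I)
  simp only [id_eq, h_rect, smul_zero, add_zero, sub_zero] at h_lim
  exact sub_eq_zero.mp (tendsto_nhds_unique h_lim tendsto_const_nhds)

lemma integral_Ioi_eq_integral_exp_smul {E : Type*} [NormedAddCommGroup E] [NormedSpace ℝ E]
    (f : ℝ → E) :
    ∫ r in Ioi (0 : ℝ), f r = ∫ s : ℝ, Real.exp s • f (Real.exp s) := by
  simpa [Real.range_exp, abs_of_pos (Real.exp_pos _)] using
    integral_image_eq_integral_abs_deriv_smul (s := univ) (f := Real.exp) MeasurableSet.univ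
      (fun x _ => (Real.hasDerivAt_exp x).hasDerivWithinAt) Real.exp_injective.injOn f

lemma integrable_exp_smul_iff {E : Type*} [NormedAddCommGroup E] [NormedSpace ℝ E] {f : ℝ → E} :
    Integrable (fun s : ℝ => Real.exp s • f (Real.exp s)) ↔ IntegrableOn f (Ioi 0) := by
  simpa [Real.range_exp, abs_of_pos (Real.exp_pos _)] using
    (integrableOn_image_iff_integrableOn_abs_deriv_smul (s := univ) (f := Real.exp)
      MeasurableSet.univ (fun x _ => (Real.hasDerivAt_exp x).hasDerivWithinAt)
      Real.exp_injective.injOn f).symm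

-- With `u = exp z` the rotation becomes a vertical shift of the line of integration.
lemma integral_Ioi_eq_integral_ray {f : ℂ → ℂ} {g : ℝ → ℝ} {θ : ℝ} (hθ : |θ| < Real.pi)
    (hf : DifferentiableOn ℂ f Complex.slitPlane) (hg : IntegrableOn g (Ioi 0))
    (hg_zero : Tendsto (fun r => r * g r) (𝓝[>] 0) (𝓝 0))
    (hg_top : Tendsto (fun r => r * g r) atTop (𝓝 0))
    (hfg : ∀ r : ℝ, 0 < r → ∀ τ ∈ uIcc 0 θ, ‖f (r * Complex.exp (τ * Complex.I))‖ ≤ g r) :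
    ∫ r in Ioi (0 : ℝ), f r =
      Complex.exp (θ * Complex.I) *
        ∫ r in Ioi (0 : ℝ), f (r * Complex.exp (θ * Complex.I)) := by
  have h_diff : DifferentiableOn ℂ (fun z => Complex.exp z * f (Complex.exp z))
      (univ ×ℂ uIcc 0 θ) := by
    refine Complex.differentiable_exp.differentiableOn.mul
      (hf.comp Complex.differentiable_exp.differentiableOn fun z hz => ?_)
    have h_im : |z.im| < Real.pi := by
      simpa using (abs_sub_left_of_mem_uIcc hz.2).trans_lt (by simpa using hθ)
    obtain ⟨h_lower, h_upper⟩ := abs_lt.mp h_im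
    rw [Complex.mem_slitPlane_iff_arg, ← Complex.log_im, Complex.log_exp h_lower h_upper.le]
    exact ⟨h_upper.ne, Complex.exp_ne_zero z⟩
  have h_shift := integral_add_mul_I_eq h_diff (integrable_exp_smul_iff.mpr hg)
    (hg_top.comp Real.tendsto_exp_atTop) (hg_zero.comp Real.tendsto_exp_atBot_nhdsGT)
    fun s τ hτ => by
      simpa [Complex.exp_add, Complex.norm_exp] using mul_le_mul_of_nonneg_left
        (hfg _ (Real.exp_pos s) τ hτ) (Real.exp_pos s).le
  rw [integral_Ioi_eq_integral_exp_smul, integral_Ioi_eq_integral_exp_smul, ← integral_const_mul]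
  refine Eq.trans (by simp) (h_shift.trans (integral_congr_ae (.of_forall fun s => ?_)))
  simp only [Complex.exp_add, Complex.real_smul, Complex.ofReal_exp]
  ring

end RayRotation

section LaplaceIntegrals

lemma ofReal_mul_exp_mul_I_cpow {r θ : ℝ} (hr : 0 < r) (hθ : |θ| < Real.pi) (a : ℂ) :
    (r * Complex.exp (θ * Complex.I)) ^ a = r ^ a * Complex.exp (a * (θ * Complex.I)) := by
  have h_log : Complex.log (Complex.exp (θ * Complex.I)) = θ * Complex.I :=
    Complex.log_exp (by simpa using (abs_lt.mp hθ).1) (by simpa using (abs_lt.mp hθ).2.le)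
  have hr' : (r : ℂ) ≠ 0 := Complex.ofReal_ne_zero.mpr hr.ne'
  rw [Complex.cpow_def_of_ne_zero (mul_ne_zero hr' (Complex.exp_ne_zero _)),
    Complex.log_ofReal_mul hr (Complex.exp_ne_zero _), h_log, Complex.cpow_def_of_ne_zero hr',
    ← Complex.exp_add, Complex.ofReal_log hr.le]
  ring_nf

lemma norm_ofReal_mul_exp_mul_I_cpow_le {r θ : ℝ} (hr : 0 < r) (hθ : |θ| < Real.pi) (a : ℂ) :
    ‖(r * Complex.exp (θ * Complex.I)) ^ a‖ ≤ r ^ a.re * Real.exp (Real.pi * |a.im|) := by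
  rw [ofReal_mul_exp_mul_I_cpow hr hθ, norm_mul, Complex.norm_cpow_eq_rpow_re_of_pos hr,
    Complex.norm_exp]
  gcongr
  calc (a * (θ * Complex.I)).re = -(θ * a.im) := by simp [mul_comm]
    _ ≤ |θ| * |a.im| := by rw [← abs_mul]; exact neg_le_abs _
    _ ≤ Real.pi * |a.im| := by gcongr

lemma cos_le_cos_of_mem_uIcc_zero {θ τ : ℝ} (hθ : |θ| ≤ Real.pi) (hτ : τ ∈ uIcc 0 θ) :
    Real.cos θ ≤ Real.cos τ := by
  rw [← Real.cos_abs θ, ← Real.cos_abs τ]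
  exact Real.cos_le_cos_of_nonneg_of_le_pi (abs_nonneg _) hθ
    (by simpa using abs_sub_left_of_mem_uIcc hτ)

lemma integrableOn_rpow_mul_exp_neg_mul_Ioi {s c : ℝ} (hs : -1 < s) (hc : 0 < c) :
    IntegrableOn (fun r : ℝ => r ^ s * Real.exp (-(c * r))) (Ioi 0) := by
  simpa using integrableOn_rpow_mul_exp_neg_mul_rpow hs one_pos hc

lemma integral_cpow_mul_exp_neg_mul_eq_integral_ray {a : ℂ} {ρ θ : ℝ} (ha : 0 < a.re) (hρ : 0 < ρ)
    (hθ : |θ| < Real.pi / 2) :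
    ∫ r in Ioi (0 : ℝ), (r : ℂ) ^ (a - 1) * Complex.exp (-(ρ * r)) =
      Complex.exp (a * (θ * Complex.I)) * ∫ r in Ioi (0 : ℝ),
        (r : ℂ) ^ (a - 1) * Complex.exp (-(ρ * Complex.exp (θ * Complex.I) * r)) := by
  have hθ_pi : |θ| < Real.pi := by linarith [Real.pi_pos]
  set K := Real.exp (Real.pi * |(a - 1).im|)
  set c := ρ * Real.cos θ
  have hc : 0 < c := mul_pos hρ (Real.cos_pos_of_mem_Ioo (abs_lt.mp hθ))
  have h_scale : ∀ r : ℝ, 0 < r → r * (K * (r ^ (a.re - 1) * Real.exp (-(c * r)))) =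
      K * (r ^ a.re * Real.exp (-c * r)) := fun r hr => by
    rw [Real.rpow_sub_one hr.ne']
    field_simp
  have h_rot := integral_Ioi_eq_integral_ray (f := fun u => u ^ (a - 1) * Complex.exp (-(ρ * u)))
    (g := fun r => K * (r ^ (a.re - 1) * Real.exp (-(c * r)))) hθ_pi ?_
    ((integrableOn_rpow_mul_exp_neg_mul_Ioi (by linarith) hc).const_mul K) ?_ ?_ ?_
  · rw [h_rot, ← integral_const_mul, ← integral_const_mul]
    refine setIntegral_congr_fun measurableSet_Ioi fun r hr => ?_
    simp only [ofReal_mul_exp_mul_I_cpow hr hθ_pi, sub_one_mul, Complex.exp_sub]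
    field_simp
  · exact (differentiableOn_id.cpow_const fun z hz => hz).mul (by fun_prop)
  · have h_cont : Continuous fun r : ℝ => K * (r ^ a.re * Real.exp (-c * r)) := by
      fun_prop (disch := exact ha.le)
    exact ((h_cont.tendsto' 0 0 (by simp [ha.ne'])).mono_left nhdsWithin_le_nhds).congr'
      (eventually_mem_nhdsWithin.mono fun r hr => (h_scale r hr).symm)
  · exact (by simpa using (tendsto_rpow_mul_exp_neg_mul_atTop_nhds_zero a.re c hc).const_mul K :
      Tendsto (fun r => K * (r ^ a.re * Real.exp (-c * r))) atTop (𝓝 0)).congr'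
      ((eventually_gt_atTop 0).mono fun r hr => (h_scale r hr).symm)
  · intro r hr τ hτ
    have hτ_pi : |τ| < Real.pi := by
      simpa using (abs_sub_left_of_mem_uIcc hτ).trans_lt (by simpa using hθ_pi)
    have h_exp : ‖Complex.exp (-(ρ * (r * Complex.exp (τ * Complex.I))))‖ ≤
        Real.exp (-(c * r)) := by
      rw [Complex.norm_exp, Real.exp_le_exp]
      simp only [Complex.neg_re, Complex.re_ofReal_mul, Complex.exp_ofReal_mul_I_re, c]
      nlinarith [cos_le_cos_of_mem_uIcc_zero hθ_pi.le hτ, mul_pos hρ hr]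
    calc _ ≤ (r ^ (a.re - 1) * K) * Real.exp (-(c * r)) := by
          rw [norm_mul]
          exact mul_le_mul (norm_ofReal_mul_exp_mul_I_cpow_le hr hτ_pi (a - 1)) h_exp
            (norm_nonneg _) (by positivity)
      _ = _ := by ring

lemma integral_cpow_mul_exp_neg_mul_Ioi_of_re_pos {a z : ℂ} (ha : 0 < a.re) (hz : 0 < z.re) :
    ∫ r in Ioi (0 : ℝ), (r : ℂ) ^ (a - 1) * Complex.exp (-(z * r)) =
      Complex.Gamma a * z ^ (-a) := by
  have h_norm : 0 < ‖z‖ := norm_pos_iff.mpr fun h => by simp [h] at hz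
  have h_arg : |z.arg| < Real.pi / 2 := Complex.abs_arg_lt_pi_div_two_iff.mpr (.inl hz)
  have h_ray := integral_cpow_mul_exp_neg_mul_eq_integral_ray ha h_norm h_arg
  rw [Complex.norm_mul_exp_arg_mul_I, Complex.integral_cpow_mul_exp_neg_mul_Ioi ha h_norm] at h_ray
  have h_pow : z ^ (-a) = (1 / ‖z‖ : ℂ) ^ a * Complex.exp (-(a * (z.arg * Complex.I))) := by
    nth_rw 1 [← Complex.norm_mul_exp_arg_mul_I z]
    rw [ofReal_mul_exp_mul_I_cpow h_norm (by linarith [Real.pi_pos]), one_div, Complex.inv_cpow,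
      Complex.cpow_neg, neg_mul]
    rw [Complex.arg_ofReal_of_nonneg h_norm.le]
    exact Real.pi_pos.ne
  rw [h_pow, Complex.exp_neg, ← mul_assoc, mul_comm (Complex.Gamma a), h_ray]
  field_simp

lemma integrableOn_cpow_mul_exp_neg_mul_Ioi {a z : ℂ} (ha : 0 < a.re) (hz : 0 < z.re) :
    IntegrableOn (fun r : ℝ => (r : ℂ) ^ (a - 1) * Complex.exp (-(z * r))) (Ioi 0) := by
  refine (integrableOn_rpow_mul_exp_neg_mul_Ioi (s := a.re - 1) (by linarith) hz).mono'
    (ContinuousOn.aestronglyMeasurable ?_ measurableSet_Ioi)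
    (ae_restrict_of_forall_mem measurableSet_Ioi fun r hr => ?_)
  · refine ContinuousOn.mul (fun r hr => ?_) (by fun_prop)
    exact (Complex.continuousAt_ofReal_cpow_const r _ (.inr (ne_of_gt hr))).continuousWithinAt
  · simp [Complex.norm_cpow_eq_rpow_re_of_pos hr, Complex.norm_exp]

lemma norm_exp_neg_mul_mul_exp_cpow_remainder_le {Y r : ℝ} {B : ℂ} (z : ℂ) (hr : 0 < r)
    (hB : B.re ≤ 0) :
    ‖Complex.exp (-(z * r)) *
        (Complex.exp (B * (r : ℂ) ^ (Y : ℂ)) - 1 - B * (r : ℂ) ^ (Y : ℂ))‖ ≤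
      3 * ‖B‖ ^ 2 * (r ^ (2 * Y + 1 - 1) * Real.exp (-(z.re * r))) := by
  rw [← Complex.ofReal_cpow hr.le]
  have h_pow : 0 ≤ r ^ Y := Real.rpow_nonneg hr.le Y
  have h_norm : ‖B * (r ^ Y : ℝ)‖ ^ 2 = ‖B‖ ^ 2 * r ^ (2 * Y + 1 - 1) := by
    rw [norm_mul, mul_pow, Complex.norm_of_nonneg h_pow, ← Real.rpow_mul_natCast hr.le]
    ring_nf
  calc _ ≤ Real.exp (-(z.re * r)) * (3 * ‖B * (r ^ Y : ℝ)‖ ^ 2) := by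
        rw [norm_mul, Complex.norm_exp, Complex.neg_re, Complex.re_mul_ofReal]
        gcongr
        exact norm_exp_sub_one_sub_id_le_of_re_nonpos
          (by simpa only [Complex.re_mul_ofReal] using mul_nonpos_of_nonpos_of_nonneg hB h_pow)
    _ = _ := by rw [h_norm]; ring

lemma integrableOn_exp_neg_mul_mul_exp_cpow {Y : ℝ} {z B : ℂ} (hY : 0 < Y) (hz : 0 < z.re)
    (hB : B.re ≤ 0) :
    IntegrableOn (fun r : ℝ => Complex.exp (-(z * r)) * Complex.exp (B * (r : ℂ) ^ (Y : ℂ)))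
      (Ioi 0) := by
  have h_cont : Continuous fun r : ℝ => (r : ℂ) ^ (Y : ℂ) :=
    Complex.continuous_ofReal_cpow_const (by simpa using hY)
  refine (integrableOn_rpow_mul_exp_neg_mul_Ioi (s := 0) (by norm_num) hz).mono'
    (by fun_prop) (ae_restrict_of_forall_mem measurableSet_Ioi fun r hr => ?_)
  rw [norm_mul, Complex.norm_exp, Complex.norm_exp, ← Complex.ofReal_cpow (le_of_lt hr),
    Complex.re_mul_ofReal, Real.rpow_zero, one_mul, Complex.neg_re, Complex.re_mul_ofReal]
  exact mul_le_of_le_one_right (Real.exp_pos _).le (Real.exp_le_one_iff.mpr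
    (mul_nonpos_of_nonpos_of_nonneg hB (Real.rpow_nonneg (le_of_lt hr) Y)))

lemma norm_integral_exp_neg_mul_mul_exp_cpow_sub_le {Y : ℝ} {z B : ℂ} (hY : 0 < Y)
    (hz : 0 < z.re) (hB : B.re ≤ 0) :
    ‖(∫ r in Ioi (0 : ℝ), Complex.exp (-(z * r)) * Complex.exp (B * (r : ℂ) ^ (Y : ℂ))) -
        (z ^ (-1 : ℂ) + B * (Complex.Gamma (Y + 1) * z ^ (-(Y + 1) : ℂ)))‖ ≤
      3 * ‖B‖ ^ 2 * (Real.Gamma (2 * Y + 1) * z.re ^ (-(2 * Y + 1))) := by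
  have h_one := integral_cpow_mul_exp_neg_mul_Ioi_of_re_pos (a := 1) (by simp) hz
  have h_Y := integral_cpow_mul_exp_neg_mul_Ioi_of_re_pos (a := Y + 1) (by simp; linarith) hz
  have h_int_one := integrableOn_cpow_mul_exp_neg_mul_Ioi (a := 1) (by simp) hz
  have h_int_Y := integrableOn_cpow_mul_exp_neg_mul_Ioi (a := Y + 1) (by simp; linarith) hz
  have h_int := integrableOn_exp_neg_mul_mul_exp_cpow hY hz hB
  simp only [sub_self, Complex.cpow_zero, one_mul, add_sub_cancel_right, Complex.Gamma_one]
    at h_one h_Y h_int_one h_int_Y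
  have h_remainder : (∫ r in Ioi (0 : ℝ),
        Complex.exp (-(z * r)) * Complex.exp (B * (r : ℂ) ^ (Y : ℂ))) -
        (z ^ (-1 : ℂ) + B * (Complex.Gamma (Y + 1) * z ^ (-(Y + 1) : ℂ))) =
      ∫ r in Ioi (0 : ℝ), Complex.exp (-(z * r)) *
        (Complex.exp (B * (r : ℂ) ^ (Y : ℂ)) - 1 - B * (r : ℂ) ^ (Y : ℂ)) := by
    rw [← h_one, ← h_Y, ← integral_const_mul, ← sub_sub, ← integral_sub h_int h_int_one,
      ← integral_sub (h_int.sub' h_int_one) (h_int_Y.const_mul B)]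
    refine integral_congr_ae (.of_forall fun r => ?_)
    ring
  calc _ ≤ ∫ r in Ioi (0 : ℝ), 3 * ‖B‖ ^ 2 * (r ^ (2 * Y + 1 - 1) * Real.exp (-(z.re * r))) := by
        rw [h_remainder]
        exact norm_integral_le_of_norm_le
          ((integrableOn_rpow_mul_exp_neg_mul_Ioi (by linarith) hz).const_mul _)
          (ae_restrict_of_forall_mem measurableSet_Ioi fun r hr =>
            norm_exp_neg_mul_mul_exp_cpow_remainder_le z hr hB)
    _ = _ := by
        rw [integral_const_mul, Real.integral_rpow_mul_exp_neg_mul_Ioi (by linarith) hz, one_div,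
          Real.inv_rpow hz.le, ← Real.rpow_neg hz.le, mul_comm (z.re ^ _)]

end LaplaceIntegrals

section Oscillatory

variable {Y θ : ℝ} {B : ℂ}

lemma exists_pos_re_mul_exp_mul_I_le_neg
    (hB : ∀ τ ∈ uIcc 0 θ, (B * Complex.exp (Y * (τ * Complex.I))).re < 0) :
    ∃ c > 0, ∀ τ ∈ uIcc 0 θ, (B * Complex.exp (Y * (τ * Complex.I))).re ≤ -c := by
  obtain ⟨τ₀, hτ₀, h_max⟩ := isCompact_uIcc.exists_isMaxOn nonempty_uIcc
    (by fun_prop : ContinuousOn (fun τ : ℝ => (B * Complex.exp (Y * (τ * Complex.I))).re)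
      (uIcc 0 θ))
  exact ⟨_, neg_pos.mpr (hB τ₀ hτ₀), fun τ hτ => by simpa using h_max hτ⟩

lemma integral_exp_neg_I_mul_mul_exp_cpow_eq_integral_ray {x : ℝ} (hY : 0 < Y) (hx : 0 ≤ x)
    (hθ : θ ∈ Ioo (-Real.pi) 0)
    (hB : ∀ τ ∈ uIcc 0 θ, (B * Complex.exp (Y * (τ * Complex.I))).re < 0) :
    ∫ u in Ioi (0 : ℝ), Complex.exp (-(Complex.I * x * u)) * Complex.exp (B * (u : ℂ) ^ (Y : ℂ)) =
      Complex.exp (θ * Complex.I) * ∫ r in Ioi (0 : ℝ),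
        Complex.exp (-(Complex.I * x * Complex.exp (θ * Complex.I) * r)) *
          Complex.exp (B * Complex.exp (Y * (θ * Complex.I)) * (r : ℂ) ^ (Y : ℂ)) := by
  have hθ_pi : |θ| < Real.pi := abs_lt.mpr ⟨hθ.1, hθ.2.trans Real.pi_pos⟩
  obtain ⟨c, hc, hBc⟩ := exists_pos_re_mul_exp_mul_I_le_neg hB
  rw [integral_Ioi_eq_integral_ray (g := fun r => Real.exp (-c * r ^ Y)) hθ_pi
    (f := fun u => Complex.exp (-(Complex.I * x * u)) * Complex.exp (B * u ^ (Y : ℂ)))]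
  · congr 1
    refine setIntegral_congr_fun measurableSet_Ioi fun r hr => ?_
    simp only [ofReal_mul_exp_mul_I_cpow hr hθ_pi]
    ring_nf
  · exact (by fun_prop : Differentiable ℂ _).differentiableOn.mul
      ((differentiableOn_id.cpow_const fun z hz => hz).const_mul B).cexp
  · simpa using integrableOn_rpow_mul_exp_neg_mul_rpow (s := 0) (by norm_num) hY hc
  · have h_cont : Continuous fun r : ℝ => r * Real.exp (-c * r ^ Y) := by
      fun_prop (disch := exact hY.le)
    exact (h_cont.tendsto' 0 0 (by simp)).mono_left nhdsWithin_le_nhds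
  · have h_comp := (tendsto_rpow_mul_exp_neg_mul_atTop_nhds_zero (1 / Y) c hc).comp
      (tendsto_rpow_atTop hY)
    refine h_comp.congr' ((eventually_gt_atTop 0).mono fun r hr => ?_)
    simp [← Real.rpow_mul hr.le, hY.ne']
  · intro r hr τ hτ
    have hτ_mem : τ ∈ Icc θ 0 := by rwa [uIcc_of_ge hθ.2.le] at hτ
    have hτ_pi : |τ| < Real.pi := abs_lt.mpr ⟨hθ.1.trans_le hτ_mem.1, hτ_mem.2.trans_lt Real.pi_pos⟩
    have h_sin : Real.sin τ ≤ 0 :=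
      Real.sin_nonpos_of_nonpos_of_neg_pi_le hτ_mem.2 (hθ.1.le.trans hτ_mem.1)
    rw [norm_mul, Complex.norm_exp, Complex.norm_exp, ofReal_mul_exp_mul_I_cpow hr hτ_pi,
      ← Complex.ofReal_cpow hr.le, mul_left_comm B, Complex.re_ofReal_mul, ← Real.exp_add,
      Real.exp_le_exp]
    have h_osc : (-(Complex.I * x * (r * Complex.exp (τ * Complex.I)))).re =
        x * r * Real.sin τ := by
      rw [mul_assoc, ← mul_assoc (x : ℂ), ← Complex.ofReal_mul, Complex.neg_re, Complex.I_mul_re,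
        Complex.im_ofReal_mul, Complex.exp_ofReal_mul_I_im, neg_neg]
    rw [h_osc]
    nlinarith [mul_nonneg hx hr.le, hBc τ hτ, Real.rpow_pos_of_pos hr Y]

lemma I_mul_ofReal_mul_exp_mul_I_cpow {x : ℝ} (hx : 0 < x) (hθ : θ ∈ Ioo (-Real.pi) 0) (a : ℂ) :
    (Complex.I * x * Complex.exp (θ * Complex.I)) ^ a =
      (Complex.I * x) ^ a * Complex.exp (a * (θ * Complex.I)) := by
  have h_polar : ∀ τ : ℝ, Complex.I * x * Complex.exp (τ * Complex.I) =
      x * Complex.exp ((Real.pi / 2 + τ : ℝ) * Complex.I) := fun τ => by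
    push_cast
    rw [add_mul, Complex.exp_add, Complex.exp_pi_div_two_mul_I]
    ring
  have h_zero := h_polar 0
  simp only [Complex.ofReal_zero, zero_mul, Complex.exp_zero, mul_one] at h_zero
  have hπ := Real.pi_pos
  rw [h_polar, h_zero,
    ofReal_mul_exp_mul_I_cpow hx (abs_lt.mpr ⟨by linarith [hθ.1], by linarith [hθ.2]⟩),
    ofReal_mul_exp_mul_I_cpow hx (abs_lt.mpr ⟨by linarith, by linarith⟩), mul_assoc,
    ← Complex.exp_add]
  push_cast
  ring_nf

lemma norm_integral_exp_neg_I_mul_mul_exp_cpow_sub_le {x : ℝ} (hY : 0 < Y) (hx : 0 < x)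
    (hθ : θ ∈ Ioo (-Real.pi) 0)
    (hB : ∀ τ ∈ uIcc 0 θ, (B * Complex.exp (Y * (τ * Complex.I))).re < 0) :
    ‖(∫ u in Ioi (0 : ℝ),
          Complex.exp (-(Complex.I * x * u)) * Complex.exp (B * (u : ℂ) ^ (Y : ℂ))) -
        ((Complex.I * x) ^ (-1 : ℂ) +
          B * (Complex.Gamma (Y + 1) * (Complex.I * x) ^ (-(Y + 1) : ℂ)))‖ ≤
      3 * ‖B‖ ^ 2 * (Real.Gamma (2 * Y + 1) * (-(x * Real.sin θ)) ^ (-(2 * Y + 1))) := by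
  set ρ := Complex.exp (θ * Complex.I) with hρ
  set B' := B * Complex.exp (Y * (θ * Complex.I)) with hB'
  have hz_re : (Complex.I * x * ρ).re = -(x * Real.sin θ) := by
    rw [mul_assoc, Complex.I_mul_re, Complex.im_ofReal_mul, Complex.exp_ofReal_mul_I_im]
  have hB'_norm : ‖B'‖ = ‖B‖ := by
    rw [hB', norm_mul, ← mul_assoc, ← Complex.ofReal_mul, Complex.norm_exp_ofReal_mul_I, mul_one]
  have h_expansion := norm_integral_exp_neg_mul_mul_exp_cpow_sub_le (z := Complex.I * x * ρ) hY
    (by rw [hz_re]; nlinarith [Real.sin_neg_of_neg_of_neg_pi_lt hθ.2 hθ.1])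
    (hB θ right_mem_uIcc).le
  rw [hz_re, hB'_norm] at h_expansion
  have h_main : ρ * ((Complex.I * x * ρ) ^ (-1 : ℂ) +
        B' * (Complex.Gamma (Y + 1) * (Complex.I * x * ρ) ^ (-(Y + 1) : ℂ))) =
      (Complex.I * x) ^ (-1 : ℂ) +
        B * (Complex.Gamma (Y + 1) * (Complex.I * x) ^ (-(Y + 1) : ℂ)) := by
    simp only [hρ, hB', I_mul_ofReal_mul_exp_mul_I_cpow hx hθ, neg_mul, add_mul, neg_add,
      Complex.exp_add, Complex.exp_neg, one_mul]
    field_simp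
  rwa [integral_exp_neg_I_mul_mul_exp_cpow_eq_integral_ray hY hx.le hθ hB, ← h_main, ← mul_sub,
    norm_mul, Complex.norm_exp_ofReal_mul_I, one_mul]

end Oscillatory

section FourierInversion

open scoped FourierTransform SchwartzMap ContDiff

/-- The Fourier inversion formula for the density of a measure on `ℝ`, a function of the
characteristic function only. The real part loses nothing, the integral being real. -/
noncomputable def inversionDensity (μ : Measure ℝ) (x : ℝ) : ℝ :=
  (2 * Real.pi)⁻¹ * (∫ u : ℝ, Complex.exp (-(Complex.I * x * u)) * charFun μ u).re

variable {μ : Measure ℝ}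

lemma ofReal_inversionDensity (x : ℝ) :
    (inversionDensity μ x : ℂ) =
      (2 * Real.pi : ℝ)⁻¹ * ∫ u : ℝ, Complex.exp (-(Complex.I * x * u)) * charFun μ u := by
  have h_conj : (starRingEnd ℂ) (∫ u : ℝ, Complex.exp (-(Complex.I * x * u)) * charFun μ u) =
      ∫ u : ℝ, Complex.exp (-(Complex.I * x * u)) * charFun μ u := by
    rw [← integral_conj, ← integral_neg_eq_self]
    simp [charFun_neg, ← Complex.exp_conj]
  rw [inversionDensity, Complex.ofReal_mul, Complex.conj_eq_iff_re.mp h_conj, Complex.ofReal_inv]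

lemma continuous_inversionDensity (hμ : Integrable (charFun μ)) :
    Continuous (inversionDensity μ) := by
  refine continuous_const.mul (Complex.continuous_re.comp
    (continuous_of_dominated (bound := fun u => ‖charFun μ u‖) (fun x => ?_) (fun x => ?_)
      hμ.norm ?_))
  · exact (by fun_prop : Continuous _).aestronglyMeasurable.mul hμ.aestronglyMeasurable
  · exact .of_forall fun u => by simp [Complex.norm_exp]
  · exact .of_forall fun u => by fun_prop

lemma fourier_charFun_two_pi_mul (x : ℝ) :
    𝓕 (fun ξ : ℝ => charFun μ (2 * Real.pi * ξ)) x = inversionDensity μ x := by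
  have h_scale := Measure.integral_comp_mul_left
    (fun u : ℝ => Complex.exp (-(Complex.I * x * u)) * charFun μ u) (2 * Real.pi)
  rw [abs_of_pos (by positivity), Complex.real_smul] at h_scale
  rw [ofReal_inversionDensity, ← h_scale, Real.fourier_eq']
  refine integral_congr_ae (.of_forall fun ξ => ?_)
  simp only [RCLike.inner_apply, conj_trivial, smul_eq_mul]
  push_cast
  ring_nf

lemma integral_fourier_eq_integral_charFun_mul [IsFiniteMeasure μ] {g : ℝ → ℂ}
    (hg : Integrable g) :
    ∫ x, 𝓕 g x ∂μ = ∫ ξ, charFun μ (-(2 * Real.pi * ξ)) * g ξ := by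
  have h_flip := VectorFourier.integral_fourierIntegral_smul_eq_flip (μ := μ) (ν := volume)
    (L := innerₗ ℝ) (f := 1) Real.continuous_fourierChar (by fun_prop) (integrable_const _) hg
  simp only [Pi.one_apply, one_mul, smul_eq_mul, flip_innerₗ] at h_flip
  rw [show 𝓕 g = VectorFourier.fourierIntegral Real.fourierChar volume (innerₗ ℝ) g from rfl,
    ← h_flip]
  refine integral_congr_ae (.of_forall fun ξ => ?_)
  simp only [charFun_eq_fourierIntegral', smul_eq_mul]
  congr 2
  field_simp

lemma integral_schwartzMap_eq_integral_mul_inversionDensity [IsFiniteMeasure μ]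
    (hμ : Integrable (charFun μ)) (g : 𝓢(ℝ, ℂ)) :
    ∫ x, g x ∂μ = ∫ x, inversionDensity μ x * g x := by
  have h_int : Integrable fun ξ : ℝ => charFun μ (2 * Real.pi * ξ) :=
    hμ.comp_mul_left' (by positivity)
  calc ∫ x, g x ∂μ = ∫ x, 𝓕 (𝓕⁻ (g : ℝ → ℂ)) x ∂μ := by
        rw [← SchwartzMap.fourierInv_coe, ← SchwartzMap.fourier_coe,
          FourierTransform.fourier_fourierInv_eq]
    _ = ∫ ξ, charFun μ (-(2 * Real.pi * ξ)) * 𝓕⁻ (g : ℝ → ℂ) ξ :=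
        integral_fourier_eq_integral_charFun_mul
          (by rw [← SchwartzMap.fourierInv_coe]; exact SchwartzMap.integrable _)
    _ = ∫ ξ, charFun μ (2 * Real.pi * ξ) * 𝓕 (g : ℝ → ℂ) ξ := by
        rw [← integral_neg_eq_self]
        simp [Real.fourierInv_eq_fourier_neg]
    _ = ∫ x, 𝓕 (fun ξ : ℝ => charFun μ (2 * Real.pi * ξ)) x * g x := by
        have h_flip := VectorFourier.integral_fourierIntegral_smul_eq_flip (L := innerₗ ℝ)
          (ν := volume) Real.continuous_fourierChar (by fun_prop) h_int g.integrable
        rw [flip_innerₗ] at h_flip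
        exact h_flip.symm
    _ = ∫ x, inversionDensity μ x * g x := by simp only [fourier_charFun_two_pi_mul]

lemma integral_eq_integral_mul_inversionDensity [IsFiniteMeasure μ]
    (hμ : Integrable (charFun μ)) {g : ℝ → ℝ} (hg : ContDiff ℝ ∞ g)
    (hg_supp : HasCompactSupport g) :
    ∫ x, g x ∂μ = ∫ x, inversionDensity μ x * g x := by
  have h : ∫ x, (g x : ℂ) ∂μ = ∫ x, (inversionDensity μ x : ℂ) * g x :=
    integral_schwartzMap_eq_integral_mul_inversionDensity hμ
      ((hg_supp.comp_left Complex.ofReal_zero).toSchwartzMap (Complex.ofRealCLM.contDiff.comp hg))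
  simp only [← Complex.ofReal_mul, integral_complex_ofReal] at h
  exact_mod_cast h

lemma exists_contDiff_tendsto_indicator {s : Set ℝ} (hs : IsOpen s) :
    ∃ g : ℕ → ℝ → ℝ, (∀ n, ContDiff ℝ ∞ (g n)) ∧ (∀ n x, ‖g n x‖ ≤ s.indicator 1 x) ∧
      ∀ x, Tendsto (fun n => g n x) atTop (𝓝 (s.indicator 1 x)) := by
  obtain ⟨φ, hφ_supp, hφ_smooth, hφ_range⟩ := hs.exists_contDiff_support_eq (n := ⊤)
  have h0 : ∀ x, 0 ≤ φ x := fun x => (hφ_range (mem_range_self x)).1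
  have h1 : ∀ x, φ x ≤ 1 := fun x => (hφ_range (mem_range_self x)).2
  refine ⟨fun n x => 1 - (1 - φ x) ^ n,
    fun n => contDiff_const.sub ((contDiff_const.sub hφ_smooth).pow n), fun n x => ?_, fun x => ?_⟩
  · by_cases hx : x ∈ s
    · have h_nonneg : 0 ≤ (1 - φ x) ^ n := pow_nonneg (sub_nonneg.mpr (h1 x)) n
      have h_le_one : (1 - φ x) ^ n ≤ 1 :=
        pow_le_one₀ (sub_nonneg.mpr (h1 x)) (sub_le_self 1 (h0 x))
      rw [indicator_of_mem hx, Real.norm_of_nonneg (sub_nonneg.mpr h_le_one)]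
      exact sub_le_self 1 h_nonneg
    · have hφ : φ x = 0 := Function.notMem_support.mp (hφ_supp ▸ hx)
      simp [hx, hφ]
  · by_cases hx : x ∈ s
    · have h_pos : 0 < φ x := (h0 x).lt_of_ne (Ne.symm (hφ_supp ▸ hx : x ∈ Function.support φ))
      rw [indicator_of_mem hx]
      simpa using (tendsto_pow_atTop_nhds_zero_of_lt_one (sub_nonneg.mpr (h1 x))
        (sub_lt_self 1 h_pos)).const_sub 1
    · have hφ : φ x = 0 := Function.notMem_support.mp (hφ_supp ▸ hx)
      simp [hx, hφ]

lemma tendsto_integral_mul_of_norm_le_indicator {s : Set ℝ} (hs : MeasurableSet s)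
    {f : ℝ → ℝ} (hf : AEStronglyMeasurable f μ) (hf_int : IntegrableOn f s μ)
    {g : ℕ → ℝ → ℝ} (hg : ∀ n, AEStronglyMeasurable (g n) μ)
    (hg_norm : ∀ n x, ‖g n x‖ ≤ s.indicator 1 x)
    (hg_lim : ∀ x, Tendsto (fun n => g n x) atTop (𝓝 (s.indicator 1 x))) :
    Tendsto (fun n => ∫ x, f x * g n x ∂μ) atTop (𝓝 (∫ x in s, f x ∂μ)) := by
  have h_ind : ∀ (h : ℝ → ℝ) (x : ℝ), h x * s.indicator 1 x = s.indicator h x := fun h x => by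
    by_cases hx : x ∈ s <;> simp [hx]
  rw [← integral_indicator hs]
  refine tendsto_integral_of_dominated_convergence (s.indicator fun x => ‖f x‖)
    (fun n => hf.mul (hg n)) (IntegrableOn.integrable_indicator hf_int.norm hs)
    (fun n => .of_forall fun x => ?_) (.of_forall fun x => ?_)
  · rw [norm_mul, ← h_ind]
    exact mul_le_mul_of_nonneg_left (hg_norm n x) (norm_nonneg _)
  · rw [← h_ind]
    exact (hg_lim x).const_mul (f x)

lemma measureReal_Ioo_eq_integral_inversionDensity [IsFiniteMeasure μ]
    (hμ : Integrable (charFun μ)) (a b : ℝ) :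
    μ.real (Ioo a b) = ∫ x in Ioo a b, inversionDensity μ x := by
  obtain ⟨g, hg_smooth, hg_norm, hg_lim⟩ :=
    exists_contDiff_tendsto_indicator (isOpen_Ioo (a := a) (b := b))
  have hg_supp : ∀ n, HasCompactSupport (g n) := fun n =>
    .intro isCompact_Icc fun x hx => norm_le_zero_iff.mp <| (hg_norm n x).trans_eq <|
      indicator_of_notMem (fun h => hx (Ioo_subset_Icc_self h)) _
  have h_cont := continuous_inversionDensity hμ
  have h_left : Tendsto (fun n => ∫ x, g n x ∂μ) atTop (𝓝 (μ.real (Ioo a b))) := by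
    simpa using tendsto_integral_mul_of_norm_le_indicator (μ := μ) (f := fun _ => 1)
      measurableSet_Ioo (by fun_prop) (integrable_const _).integrableOn
      (fun n => (hg_smooth n).continuous.aestronglyMeasurable) hg_norm hg_lim
  refine tendsto_nhds_unique h_left (Tendsto.congr (fun n =>
    (integral_eq_integral_mul_inversionDensity hμ (hg_smooth n) (hg_supp n)).symm) ?_)
  exact tendsto_integral_mul_of_norm_le_indicator measurableSet_Ioo h_cont.aestronglyMeasurable
    (h_cont.integrableOn_Icc.mono_set Ioo_subset_Icc_self)
    (fun n => (hg_smooth n).continuous.aestronglyMeasurable) hg_norm hg_lim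

lemma inversionDensity_nonneg [IsFiniteMeasure μ] (hμ : Integrable (charFun μ)) (x : ℝ) :
    0 ≤ inversionDensity μ x := by
  have h_cont := continuous_inversionDensity hμ
  by_contra! hx
  obtain ⟨a, b, hab, h_neg⟩ := (mem_nhds_iff_exists_Ioo_subset.mp
    ((isOpen_Iio.preimage h_cont).mem_nhds hx))
  have h_pos : 0 < ∫ y in a..b, -inversionDensity μ y :=
    intervalIntegral.intervalIntegral_pos_of_pos_on (h_cont.neg.intervalIntegrable a b)
      (fun y hy => neg_pos.mpr (h_neg hy)) (hab.1.trans hab.2)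
  rw [intervalIntegral.integral_neg, intervalIntegral.integral_of_le (hab.1.trans hab.2).le,
    integral_Ioc_eq_integral_Ioo, ← measureReal_Ioo_eq_integral_inversionDensity hμ] at h_pos
  linarith [measureReal_nonneg (μ := μ) (s := Ioo a b)]

theorem eq_withDensity_inversionDensity [IsFiniteMeasure μ] (hμ : Integrable (charFun μ)) :
    μ = volume.withDensity fun x => ENNReal.ofReal (inversionDensity μ x) := by
  refine Real.measure_ext_Ioo_rat fun a b => ?_
  rw [withDensity_apply _ measurableSet_Ioo, ← ofReal_measureReal,
    measureReal_Ioo_eq_integral_inversionDensity hμ, ofReal_integral_eq_lintegral_ofReal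
      ((continuous_inversionDensity hμ).integrableOn_Icc.mono_set Ioo_subset_Icc_self)
      (.of_forall fun x => inversionDensity_nonneg hμ x)]

theorem measureReal_Ici_eq_integral_inversionDensity [IsFiniteMeasure μ]
    (hμ : Integrable (charFun μ)) (a : ℝ) :
    μ.real (Ici a) = ∫ x in Ioi a, inversionDensity μ x := by
  rw [← integral_Ici_eq_integral_Ioi, integral_eq_lintegral_of_nonneg_ae
    (.of_forall fun x => inversionDensity_nonneg hμ x)
    (continuous_inversionDensity hμ).aestronglyMeasurable,
    ← withDensity_apply _ measurableSet_Ici, ← eq_withDensity_inversionDensity hμ, measureReal_def]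

lemma inversionDensity_eq_integral_Ioi (hμ : Integrable (charFun μ)) (x : ℝ) :
    inversionDensity μ x =
      Real.pi⁻¹ * (∫ u in Ioi (0 : ℝ), Complex.exp (-(Complex.I * x * u)) * charFun μ u).re := by
  set F : ℝ → ℂ := fun u => Complex.exp (-(Complex.I * x * u)) * charFun μ u
  have hF_int : Integrable F :=
    hμ.bdd_mul (by fun_prop : Continuous _).aestronglyMeasurable
      (.of_forall fun u => (by simp [Complex.norm_exp] : _ ≤ (1 : ℝ)))
  have h_conj : ∫ u in Iic (0 : ℝ), F u = (starRingEnd ℂ) (∫ u in Ioi (0 : ℝ), F u) := by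
    rw [← integral_conj, ← neg_zero, ← integral_comp_neg_Iic]
    simp [F, charFun_neg, ← Complex.exp_conj]
  have h_re : (∫ u, F u).re = 2 * (∫ u in Ioi (0 : ℝ), F u).re := by
    rw [← intervalIntegral.integral_Iic_add_Ioi hF_int.integrableOn hF_int.integrableOn, h_conj,
      Complex.add_re, Complex.conj_re, two_mul]
  rw [inversionDensity, h_re, mul_inv]
  ring

end FourierInversion

section StableLaw

/-- The complex number `C Γ(-Y) e^{-iπY/2}`, which is the integral of `(e^{ix} - 1 - ix) C x^{-Y-1}`
over `(0, ∞)` when `Y ∈ (1, 2)`. -/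
noncomputable def stableExponent (C Y : ℝ) : ℂ :=
  (C * Real.Gamma (-Y) : ℝ) * Complex.exp ((-(Real.pi * Y / 2) : ℝ) * Complex.I)

/-- The centered, totally positively skewed, strictly `Y`-stable law of the compensated Lévy process
with Lévy density `C x^{-Y-1}` on `(0, ∞)`. The characteristic function of a measure being
hermitian, it is enough to prescribe it on `[0, ∞)`. -/
def IsPositivelySkewedStable (μ : Measure ℝ) (C Y : ℝ) : Prop :=
  ∀ u : ℝ, 0 ≤ u → charFun μ u = Complex.exp (stableExponent C Y * (u : ℂ) ^ (Y : ℂ))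

variable {C Y : ℝ} {μ : Measure ℝ}

lemma sin_pi_mul_neg_of_mem_Ioo (hY : Y ∈ Ioo (1 : ℝ) 2) : Real.sin (Real.pi * Y) < 0 := by
  have h_pos : 0 < Real.sin (Real.pi * Y - Real.pi) :=
    Real.sin_pos_of_pos_of_lt_pi (by nlinarith [Real.pi_pos, hY.1])
      (by nlinarith [Real.pi_pos, hY.2])
  rw [Real.sin_sub_pi] at h_pos
  exact neg_pos.mp h_pos

lemma Gamma_neg_mul_Gamma_add_one_mul_sin (hY : Y ∈ Ioo (1 : ℝ) 2) :
    Real.Gamma (-Y) * Real.Gamma (Y + 1) * -Real.sin (Real.pi * Y) = Real.pi := by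
  have h_reflection := Real.Gamma_mul_Gamma_one_sub (-Y)
  rw [mul_neg, Real.sin_neg, sub_neg_eq_add, add_comm] at h_reflection
  rw [h_reflection, div_mul_cancel₀ _ (neg_ne_zero.mpr (sin_pi_mul_neg_of_mem_Ioo hY).ne)]

lemma Gamma_neg_pos (hY : Y ∈ Ioo (1 : ℝ) 2) : 0 < Real.Gamma (-Y) := by
  have h_prod := Gamma_neg_mul_Gamma_add_one_mul_sin hY
  have h_sin : 0 < -Real.sin (Real.pi * Y) := neg_pos.mpr (sin_pi_mul_neg_of_mem_Ioo hY)
  have h_Gamma : 0 < Real.Gamma (Y + 1) := Real.Gamma_pos_of_pos (by linarith [hY.1])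
  rw [mul_assoc] at h_prod
  exact pos_of_mul_pos_left (Real.pi_pos.trans_eq h_prod.symm) (mul_pos h_Gamma h_sin).le

lemma stableExponent_mul_exp_re (C Y τ : ℝ) :
    (stableExponent C Y * Complex.exp (τ * Complex.I)).re =
      C * Real.Gamma (-Y) * Real.cos (τ - Real.pi * Y / 2) := by
  rw [stableExponent, mul_assoc, ← Complex.exp_add, ← add_mul, ← Complex.ofReal_add,
    Complex.re_ofReal_mul, Complex.exp_ofReal_mul_I_re, neg_add_eq_sub]

lemma stableExponent_mul_exp_re_neg (hC : 0 < C) (hY : Y ∈ Ioo (1 : ℝ) 2) {τ : ℝ}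
    (hτ : τ ∈ uIcc 0 (-(Real.pi / 4))) :
    (stableExponent C Y * Complex.exp (Y * (τ * Complex.I))).re < 0 := by
  have hπ := Real.pi_pos
  rw [uIcc_of_ge (by linarith), mem_Icc] at hτ
  rw [← mul_assoc, ← Complex.ofReal_mul, stableExponent_mul_exp_re, ← Real.cos_neg]
  exact mul_neg_of_pos_of_neg (mul_pos hC (Gamma_neg_pos hY))
    (Real.cos_neg_of_pi_div_two_lt_of_lt (by nlinarith [hY.1]) (by nlinarith [hY.1, hY.2]))

lemma stableExponent_re_neg (hC : 0 < C) (hY : Y ∈ Ioo (1 : ℝ) 2) :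
    (stableExponent C Y).re < 0 := by
  simpa using stableExponent_mul_exp_re_neg hC hY left_mem_uIcc

lemma inversion_main_term_re (hY : Y ∈ Ioo (1 : ℝ) 2) {x : ℝ} (hx : 0 < x) :
    ((Complex.I * x) ^ (-1 : ℂ) + stableExponent C Y *
      (Complex.Gamma (Y + 1) * (Complex.I * x) ^ (-(Y + 1) : ℂ))).re =
      Real.pi * (C * x ^ (-(Y + 1))) := by
  have h_polar : Complex.I * x = x * Complex.exp ((Real.pi / 2 : ℝ) * Complex.I) := by
    rw [Complex.ofReal_div, Complex.ofReal_ofNat, Complex.exp_pi_div_two_mul_I, mul_comm]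
  have h_inv : ((Complex.I * x) ^ (-1 : ℂ)).re = 0 := by
    simp [Complex.cpow_neg_one]
  have h_pow : (Complex.I * x) ^ (-(Y + 1) : ℂ) =
      (x ^ (-(Y + 1)) : ℝ) * Complex.exp ((-(Y + 1) * (Real.pi / 2) : ℝ) * Complex.I) := by
    rw [h_polar, ofReal_mul_exp_mul_I_cpow hx (by rw [abs_of_pos] <;> linarith [Real.pi_pos]),
      Complex.ofReal_cpow hx.le]
    push_cast
    ring_nf
  have h_prod : stableExponent C Y * (Complex.Gamma (Y + 1) * (Complex.I * x) ^ (-(Y + 1) : ℂ)) =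
      (Real.Gamma (Y + 1) * x ^ (-(Y + 1)) : ℝ) * (stableExponent C Y *
        Complex.exp ((-(Y + 1) * (Real.pi / 2) : ℝ) * Complex.I)) := by
    rw [h_pow, ← Complex.ofReal_one, ← Complex.ofReal_add, Complex.Gamma_ofReal]
    push_cast
    ring
  have h_cos : Real.cos (-(Y + 1) * (Real.pi / 2) - Real.pi * Y / 2) =
      -Real.sin (Real.pi * Y) := by
    rw [← Real.cos_add_pi_div_two, ← Real.cos_neg]
    ring_nf
  rw [Complex.add_re, h_inv, zero_add, h_prod, Complex.re_ofReal_mul, stableExponent_mul_exp_re,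
    h_cos]
  linear_combination C * x ^ (-(Y + 1)) * Gamma_neg_mul_Gamma_add_one_mul_sin hY

namespace IsPositivelySkewedStable

lemma norm_charFun (h : IsPositivelySkewedStable μ C Y) (u : ℝ) :
    ‖charFun μ u‖ = Real.exp ((stableExponent C Y).re * |u| ^ Y) := by
  have h_even : ‖charFun μ u‖ = ‖charFun μ |u|‖ := by
    rcases abs_choice u with hu | hu <;> simp [hu, charFun_neg]
  rw [h_even, h _ (abs_nonneg u), ← Complex.ofReal_cpow (abs_nonneg u), Complex.norm_exp,
    Complex.re_mul_ofReal]

lemma integrable_charFun [IsFiniteMeasure μ] (h : IsPositivelySkewedStable μ C Y) (hC : 0 < C)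
    (hY : Y ∈ Ioo (1 : ℝ) 2) : Integrable (charFun μ) := by
  have hY0 : 0 < Y := by linarith [hY.1]
  refine continuous_charFun.locallyIntegrable.integrable_of_isBigO_atTop_of_norm_isNegInvariant
    (g := fun u => u ^ (0 : ℝ) * Real.exp (-(-(stableExponent C Y).re) * u ^ Y))
    (.of_forall fun u => by simp [charFun_neg]) ?_ ⟨Ioi 0, Ioi_mem_atTop 0,
      integrableOn_rpow_mul_exp_neg_mul_rpow (by norm_num) hY0
        (neg_pos.mpr (stableExponent_re_neg hC hY))⟩
  refine .of_norm_eventuallyLE ?_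
  filter_upwards [eventually_ge_atTop 0] with u hu
  rw [h.norm_charFun, abs_of_nonneg hu, Real.rpow_zero, one_mul, neg_neg]

lemma norm_one_sub_charFun_le (h : IsPositivelySkewedStable μ C Y) (hC : 0 < C)
    (hY : Y ∈ Ioo (1 : ℝ) 2) (u : ℝ) :
    ‖1 - charFun μ u‖ ≤ 2 * ‖stableExponent C Y‖ * |u| ^ Y := by
  have h_even : ‖1 - charFun μ u‖ = ‖charFun μ |u| - 1‖ := by
    rcases abs_choice u with hu | hu
    · rw [hu, norm_sub_rev]
    · rw [hu, charFun_neg, norm_sub_rev, ← Complex.norm_conj, map_sub, map_one]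
  have h_pow : 0 ≤ |u| ^ Y := Real.rpow_nonneg (abs_nonneg u) Y
  rw [h_even, h _ (abs_nonneg u), ← Complex.ofReal_cpow (abs_nonneg u)]
  refine (norm_exp_sub_one_le_of_re_nonpos ?_).trans_eq ?_
  · rw [Complex.re_mul_ofReal]
    exact mul_nonpos_of_nonpos_of_nonneg (stableExponent_re_neg hC hY).le h_pow
  · rw [norm_mul, Complex.norm_real, Real.norm_of_nonneg h_pow, mul_assoc]

lemma abs_inversionDensity_sub_le [IsFiniteMeasure μ] (h : IsPositivelySkewedStable μ C Y)
    (hC : 0 < C) (hY : Y ∈ Ioo (1 : ℝ) 2) :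
    ∃ K, ∀ x, 0 < x → |inversionDensity μ x - C * x ^ (-(Y + 1))| ≤ K * x ^ (-(2 * Y + 1)) := by
  have hY0 : 0 < Y := by linarith [hY.1]
  have hπ := Real.pi_pos
  have h_sin : Real.sin (-(Real.pi / 4)) < 0 :=
    Real.sin_neg_of_neg_of_neg_pi_lt (by linarith) (by linarith)
  refine ⟨Real.pi⁻¹ * (3 * ‖stableExponent C Y‖ ^ 2 * (Real.Gamma (2 * Y + 1) *
    (-Real.sin (-(Real.pi / 4))) ^ (-(2 * Y + 1)))), fun x hx => ?_⟩
  have h_expansion := norm_integral_exp_neg_I_mul_mul_exp_cpow_sub_le hY0 hx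
    (θ := -(Real.pi / 4)) ⟨by linarith, by linarith⟩
    (fun τ hτ => stableExponent_mul_exp_re_neg hC hY hτ)
  rw [← mul_neg, Real.mul_rpow hx.le (neg_nonneg.mpr h_sin.le)] at h_expansion
  have h_charFun : ∫ u in Ioi (0 : ℝ), Complex.exp (-(Complex.I * x * u)) * charFun μ u =
      ∫ u in Ioi (0 : ℝ), Complex.exp (-(Complex.I * x * u)) *
        Complex.exp (stableExponent C Y * (u : ℂ) ^ (Y : ℂ)) :=
    setIntegral_congr_fun measurableSet_Ioi fun u (hu : 0 < u) => by rw [h u hu.le]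
  have h_re := (Complex.abs_re_le_norm _).trans h_expansion
  rw [Complex.sub_re, ← h_charFun, inversion_main_term_re hY hx] at h_re
  rw [inversionDensity_eq_integral_Ioi (h.integrable_charFun hC hY)]
  calc |Real.pi⁻¹ * (∫ u in Ioi (0 : ℝ), Complex.exp (-(Complex.I * x * u)) * charFun μ u).re -
        C * x ^ (-(Y + 1))|
      = Real.pi⁻¹ * |(∫ u in Ioi (0 : ℝ), Complex.exp (-(Complex.I * x * u)) * charFun μ u).re -
        Real.pi * (C * x ^ (-(Y + 1)))| := by
        rw [← abs_of_pos (inv_pos.mpr hπ), ← abs_mul, abs_of_pos (inv_pos.mpr hπ), mul_sub,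
          inv_mul_cancel_left₀ hπ.ne']
    _ ≤ _ := mul_le_mul_of_nonneg_left h_re (inv_pos.mpr hπ).le
    _ = _ := by ring

end IsPositivelySkewedStable

end StableLaw

section PowerTail

variable {Ω : Type*} [MeasurableSpace Ω] {P : Measure Ω} {X : Ω → ℝ} {c p Y : ℝ}

/-- The right tail of `X` is `c v^{-Y}`, with a remainder smaller by a factor `1/v`: what makes
`v` times the remainder integrable at infinity when `1 < Y`. -/
def HasPowerTail (P : Measure Ω) (X : Ω → ℝ) (c Y : ℝ) : Prop :=
  (fun v => P.real {ω | v ≤ X ω} - c * v ^ (-Y)) =O[atTop] fun v => v ^ (-(Y + 1))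

lemma isBigO_rpow_rpow_atTop_of_le {a b : ℝ} (hab : a ≤ b) :
    (fun x : ℝ => x ^ a) =O[atTop] fun x => x ^ b := by
  refine .of_norm_eventuallyLE ?_
  filter_upwards [eventually_ge_atTop 1] with x hx
  rw [Real.norm_of_nonneg (Real.rpow_nonneg (by linarith) a)]
  exact Real.rpow_le_rpow_of_exponent_le hx hab

lemma integrable_of_measureReal_abs_gt_isBigO [IsFiniteMeasure P] (hX : AEMeasurable X P)
    (hp : 1 < p) (h_tail : (fun r => P.real {ω | r < |X ω|}) =O[atTop] fun r => r ^ (-p)) :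
    Integrable X P := by
  have h_anti : Antitone fun r => P.real {ω | r < |X ω|} := fun r s hrs =>
    measureReal_mono fun ω (hω : s < |X ω|) => hrs.trans_lt hω
  have h_int : IntegrableOn (fun r => P.real {ω | r < |X ω|}) (Ioi 0) :=
    ((h_anti.locallyIntegrable.locallyIntegrableOn (Ici 0)).integrableOn_of_isBigO_atTop h_tail
      (integrableAtFilter_rpow_atTop_iff.mpr (neg_lt_neg hp))).mono_set Ioi_subset_Ici_self
  refine ⟨hX.aestronglyMeasurable, ?_⟩
  rw [hasFiniteIntegral_iff_norm]
  simp only [Real.norm_eq_abs]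
  rw [lintegral_eq_lintegral_meas_lt P (.of_forall fun ω => abs_nonneg _) (by fun_prop)]
  simpa [HasFiniteIntegral, Real.enorm_eq_ofReal] using h_int.hasFiniteIntegral

lemma measureReal_abs_gt_isBigO_of_norm_one_sub_charFun_le {μ : Measure ℝ} [IsProbabilityMeasure μ]
    (hp : 0 ≤ p) (h : ∀ t, ‖1 - charFun μ t‖ ≤ c * |t| ^ p) :
    (fun r => μ.real {x | r < |x|}) =O[atTop] fun r => r ^ (-p) := by
  have hc : 0 ≤ c := by simpa using (norm_nonneg _).trans (h 1)
  refine IsBigO.of_bound (2 * (c * 2 ^ p)) ?_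
  filter_upwards [eventually_gt_atTop 0] with r hr
  have h_integral : ‖∫ t in (-2 * r⁻¹)..(2 * r⁻¹), 1 - charFun μ t‖ ≤
      c * (2 * r⁻¹) ^ p * |2 * r⁻¹ - -2 * r⁻¹| := by
    refine intervalIntegral.norm_integral_le_of_norm_le_const fun t ht => (h t).trans ?_
    have ht_abs : |t| ≤ 2 * r⁻¹ := by
      rw [uIoc_of_le (by rw [neg_mul]; exact neg_le_self (by positivity)), mem_Ioc, neg_mul] at ht
      exact abs_le.mpr ⟨ht.1.le, ht.2⟩
    gcongr
  rw [Real.norm_of_nonneg measureReal_nonneg, Real.norm_of_nonneg (by positivity)]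
  calc μ.real {x | r < |x|} ≤ 2⁻¹ * r * ‖∫ t in (-2 * r⁻¹)..(2 * r⁻¹), 1 - charFun μ t‖ :=
        measureReal_abs_gt_le_integral_charFun hr
    _ ≤ 2⁻¹ * r * (c * (2 * r⁻¹) ^ p * |2 * r⁻¹ - -2 * r⁻¹|) := by gcongr
    _ = 2 * (c * 2 ^ p) * r ^ (-p) := by
        rw [neg_mul, sub_neg_eq_add, abs_of_pos (by positivity),
          Real.mul_rpow zero_le_two (by positivity), Real.inv_rpow hr.le, Real.rpow_neg hr.le]
        field_simp
        ring

lemma IsPositivelySkewedStable.measureReal_abs_gt_isBigO {C : ℝ} {μ : Measure ℝ}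
    [IsProbabilityMeasure μ] (h : IsPositivelySkewedStable μ C Y) (hC : 0 < C)
    (hY : Y ∈ Ioo (1 : ℝ) 2) :
    (fun r => μ.real {x | r < |x|}) =O[atTop] fun r => r ^ (-Y) :=
  measureReal_abs_gt_isBigO_of_norm_one_sub_charFun_le (by linarith [hY.1])
    (h.norm_one_sub_charFun_le hC hY)

lemma IsPositivelySkewedStable.hasPowerTail_id {C : ℝ} {μ : Measure ℝ} [IsFiniteMeasure μ]
    (h : IsPositivelySkewedStable μ C Y) (hC : 0 < C) (hY : Y ∈ Ioo (1 : ℝ) 2) :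
    HasPowerTail μ id (C / Y) Y := by
  obtain ⟨K, hK⟩ := h.abs_inversionDensity_sub_le hC hY
  have hY1 := hY.1
  refine IsBigO.trans (g := fun v => v ^ (-(2 * Y))) (.of_bound (K / (2 * Y)) ?_)
    (isBigO_rpow_rpow_atTop_of_le (by linarith))
  filter_upwards [eventually_gt_atTop 0] with v hv
  have h_int_main : IntegrableOn (fun x => C * x ^ (-(Y + 1))) (Ioi v) :=
    (integrableOn_Ioi_rpow_of_lt (by linarith) hv).const_mul C
  have h_int_error : IntegrableOn (fun x => K * x ^ (-(2 * Y + 1))) (Ioi v) :=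
    (integrableOn_Ioi_rpow_of_lt (by linarith) hv).const_mul K
  have h_bound : ∀ᵐ x ∂volume.restrict (Ioi v),
      ‖inversionDensity μ x - C * x ^ (-(Y + 1))‖ ≤ K * x ^ (-(2 * Y + 1)) :=
    (ae_restrict_mem measurableSet_Ioi).mono fun x (hx : v < x) => hK x (hv.trans hx)
  have h_int_sub : IntegrableOn (fun x => inversionDensity μ x - C * x ^ (-(Y + 1))) (Ioi v) :=
    h_int_error.mono' ((continuous_inversionDensity
      (h.integrable_charFun hC hY)).aestronglyMeasurable.sub h_int_main.1) h_bound
  have h_int_density : IntegrableOn (inversionDensity μ) (Ioi v) :=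
    (h_int_sub.add h_int_main).congr_fun (fun x _ => sub_add_cancel _ _) measurableSet_Ioi
  have h_eq : μ.real {x | v ≤ id x} - C / Y * v ^ (-Y) =
      ∫ x in Ioi v, inversionDensity μ x - C * x ^ (-(Y + 1)) := by
    rw [integral_sub h_int_density h_int_main, integral_const_mul,
      integral_Ioi_rpow_of_lt (by linarith) hv,
      ← measureReal_Ici_eq_integral_inversionDensity (h.integrable_charFun hC hY)]
    simp only [id, neg_add, neg_add_cancel_right, Ici_def]
    ring
  rw [h_eq, Real.norm_of_nonneg (Real.rpow_nonneg hv.le _)]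
  calc _ ≤ ∫ x in Ioi v, K * x ^ (-(2 * Y + 1)) := norm_integral_le_of_norm_le h_int_error h_bound
    _ = K / (2 * Y) * v ^ (-(2 * Y)) := by
      rw [integral_const_mul, integral_Ioi_rpow_of_lt (by linarith) hv]
      simp only [neg_add, neg_add_cancel_right]
      ring

lemma HasPowerTail.of_map (hX : Measurable X) (h : HasPowerTail (P.map X) id c Y) :
    HasPowerTail P X c Y := by
  refine h.congr_left fun v => ?_
  rw [map_measureReal_apply hX (measurableSet_le measurable_const measurable_id)]
  rfl

lemma HasPowerTail.const_mul {a : ℝ} (ha : 0 < a) (h : HasPowerTail P X c Y) :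
    HasPowerTail P (fun ω => a * X ω) (c * a ^ Y) Y := by
  have h_scale : Tendsto (fun v : ℝ => a⁻¹ * v) atTop atTop :=
    tendsto_id.const_mul_atTop (inv_pos.mpr ha)
  have h_rpow : ∀ p : ℝ, (fun v : ℝ => (a⁻¹ * v) ^ (-p)) =ᶠ[atTop] fun v => a ^ p * v ^ (-p) :=
    fun p => (eventually_ge_atTop 0).mono fun v hv => by
      simp only [Real.mul_rpow (inv_nonneg.mpr ha.le) hv, Real.inv_rpow ha.le,
        Real.rpow_neg ha.le, inv_inv]
  refine ((h.comp_tendsto h_scale).congr' ?_ (h_rpow (Y + 1))).trans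
    (isBigO_const_mul_self _ _ _)
  filter_upwards [h_rpow Y] with v hv
  simp only [Function.comp_apply, hv, inv_mul_le_iff₀ ha, mul_assoc]

lemma abs_rpow_neg_sub_rpow_neg_le (hY : 0 < Y) {v w : ℝ} (hv : 0 < v) (hw : v / 2 ≤ w) :
    |w ^ (-Y) - v ^ (-Y)| ≤ Y * (v / 2) ^ (-(Y + 1)) * |w - v| := by
  refine Convex.norm_image_sub_le_of_norm_hasDerivWithin_le (f := fun z : ℝ => z ^ (-Y))
    (f' := fun z => -Y * z ^ (-Y - 1)) (s := Ici (v / 2)) (fun z (hz : v / 2 ≤ z) => ?_)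
    (fun z (hz : v / 2 ≤ z) => ?_) (convex_Ici _) (half_le_self hv.le) hw
  · exact (Real.hasDerivAt_rpow_const (.inl (by linarith))).hasDerivWithinAt
  · rw [norm_mul, norm_neg, Real.norm_of_nonneg hY.le,
      Real.norm_of_nonneg (Real.rpow_nonneg (by linarith) _), ← neg_add']
    exact mul_le_mul_of_nonneg_left
      (Real.rpow_le_rpow_of_nonpos (half_pos hv) hz (by linarith)) hY.le

lemma HasPowerTail.exists_abs_sub_le (hY : 0 < Y) (h : HasPowerTail P X c Y) :
    ∃ K, 0 ≤ K ∧ ∀ᶠ v in atTop, ∀ w, |w| ≤ v / 2 →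
      |P.real {ω | v ≤ X ω + w} - c * v ^ (-Y)| ≤ K * (1 + |w|) * v ^ (-(Y + 1)) := by
  obtain ⟨K, hK_pos, hK⟩ := h.exists_pos
  obtain ⟨R, hR⟩ := eventually_atTop.mp hK.bound
  have h_half : ∀ v : ℝ, 0 < v → (v / 2) ^ (-(Y + 1)) = 2 ^ (Y + 1) * v ^ (-(Y + 1)) :=
    fun v hv => by
      rw [Real.div_rpow hv.le zero_le_two, Real.rpow_neg zero_le_two, div_inv_eq_mul, mul_comm]
  refine ⟨(K + |c| * Y) * 2 ^ (Y + 1), by positivity, ?_⟩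
  filter_upwards [eventually_gt_atTop 0, eventually_ge_atTop (2 * R)] with v hv hvR w hw
  have hvw : v / 2 ≤ v - w := by linarith [le_abs_self w]
  have h_tail : |P.real {ω | v ≤ X ω + w} - c * (v - w) ^ (-Y)| ≤ K * (v / 2) ^ (-(Y + 1)) := by
    have h_pos : 0 < v - w := by linarith
    have h_bound := hR (v - w) (by linarith)
    rw [Real.norm_of_nonneg (Real.rpow_nonneg h_pos.le _)] at h_bound
    simp only [sub_le_iff_le_add] at h_bound
    refine h_bound.trans (mul_le_mul_of_nonneg_left ?_ hK_pos.le)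
    exact Real.rpow_le_rpow_of_nonpos (half_pos hv) hvw (by linarith)
  have h_shift : |c * (v - w) ^ (-Y) - c * v ^ (-Y)| ≤
      |c| * (Y * (v / 2) ^ (-(Y + 1)) * |w|) := by
    rw [← mul_sub, abs_mul]
    simpa using mul_le_mul_of_nonneg_left (abs_rpow_neg_sub_rpow_neg_le hY hv hvw) (abs_nonneg c)
  calc |P.real {ω | v ≤ X ω + w} - c * v ^ (-Y)|
      ≤ K * (v / 2) ^ (-(Y + 1)) + |c| * (Y * (v / 2) ^ (-(Y + 1)) * |w|) :=
        (abs_sub_le _ _ _).trans (add_le_add h_tail h_shift)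
    _ = (K + |c| * Y * |w|) * (v / 2) ^ (-(Y + 1)) := by ring
    _ ≤ ((K + |c| * Y) * (1 + |w|)) * (v / 2) ^ (-(Y + 1)) := by
        gcongr
        nlinarith [abs_nonneg w, mul_nonneg (abs_nonneg c) hY.le]
    _ = (K + |c| * Y) * 2 ^ (Y + 1) * (1 + |w|) * v ^ (-(Y + 1)) := by
        rw [h_half v hv]
        ring

end PowerTail

section BigJump

variable {Ω : Type*} [MeasurableSpace Ω] {P : Measure Ω}
  {X V U T : Ω → ℝ} {c c' Y a a' b b' δ γ γ' : ℝ}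

lemma HasPowerTail.exists_abs_truncated_sub_le (hX : HasPowerTail P X c Y) (hY : 0 < Y)
    (hδ : 0 < δ) (hbδ : |b| * δ ≤ 1 / 4) :
    ∃ K, ∀ᶠ v in atTop, ∀ x, |P.real {ω | |x| ≤ δ * v ∧ v ≤ X ω + (b * x + γ)} - c * v ^ (-Y)| ≤
      K * (1 + |x|) * v ^ (-(Y + 1)) := by
  obtain ⟨K, hK_nonneg, hK⟩ := hX.exists_abs_sub_le hY
  refine ⟨K * (1 + |b| + |γ|) + |c| * δ⁻¹, ?_⟩
  filter_upwards [hK, eventually_gt_atTop 0, eventually_ge_atTop (4 * |γ|)] with v hKv hv hvγ x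
  have h_pow : 0 ≤ v ^ (-(Y + 1)) := Real.rpow_nonneg hv.le _
  have h_add : |b * x + γ| ≤ |b| * |x| + |γ| := (abs_add_le _ _).trans_eq (by rw [abs_mul])
  by_cases hx : |x| ≤ δ * v
  · have h_small : |b * x + γ| ≤ v / 2 := by
      nlinarith [mul_le_mul_of_nonneg_left hx (abs_nonneg b)]
    simp only [hx, true_and]
    refine (hKv _ h_small).trans (mul_le_mul_of_nonneg_right ?_ h_pow)
    have h_coeff : 1 + |b * x + γ| ≤ (1 + |b| + |γ|) * (1 + |x|) := by
      nlinarith [mul_nonneg (abs_nonneg γ) (abs_nonneg x), abs_nonneg b, abs_nonneg x]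
    nlinarith [mul_le_mul_of_nonneg_left h_coeff hK_nonneg,
      show 0 ≤ |c| * δ⁻¹ * (1 + |x|) by positivity]
  · have h_large : v ≤ δ⁻¹ * |x| := (le_inv_mul_iff₀ hδ).mpr (not_le.mp hx).le
    have h_split : v ^ (-Y) = v * v ^ (-(Y + 1)) := by
      rw [neg_add', Real.rpow_sub_one hv.ne', mul_div_cancel₀ _ hv.ne']
    simp only [hx, false_and, ofPred_false, measureReal_empty, zero_sub, abs_neg, abs_mul, h_split,
      abs_of_pos hv, abs_of_nonneg h_pow, ← mul_assoc]
    refine mul_le_mul_of_nonneg_right ?_ h_pow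
    nlinarith [mul_le_mul_of_nonneg_left h_large (abs_nonneg c), abs_nonneg x,
      show 0 ≤ K * (1 + |b| + |γ|) * (1 + |x|) by positivity,
      show 0 ≤ |c| * δ⁻¹ by positivity]

lemma measureReal_both_large_isBigO_of_indepFun (hUV : IndepFun U V P) (hδ : 0 < δ) (hY : 1 ≤ Y)
    (hU_tail : (fun r => P.real {ω | r < |U ω|}) =O[atTop] fun r => r ^ (-Y))
    (hV_tail : (fun r => P.real {ω | r < |V ω|}) =O[atTop] fun r => r ^ (-Y)) :
    (fun v => P.real {ω | δ * v < |U ω| ∧ δ * v < |V ω|}) =O[atTop] fun v => v ^ (-(Y + 1)) := by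
  have h_scale : Tendsto (fun v : ℝ => δ * v) atTop atTop := tendsto_id.const_mul_atTop hδ
  have h_prod : ∀ v, P.real {ω | δ * v < |U ω| ∧ δ * v < |V ω|} =
      P.real {ω | δ * v < |U ω|} * P.real {ω | δ * v < |V ω|} := fun v => by
    have h_meas : MeasurableSet {x : ℝ | δ * v < |x|} :=
      measurableSet_lt measurable_const measurable_norm
    rw [measureReal_def, measureReal_def, measureReal_def, ← ENNReal.toReal_mul]
    exact congrArg ENNReal.toReal (hUV.measure_inter_preimage_eq_mul _ _ h_meas h_meas)
  have h_rpow : (fun v : ℝ => (δ * v) ^ (-Y) * (δ * v) ^ (-Y)) =O[atTop]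
      fun v => v ^ (-(2 * Y)) := by
    refine (isBigO_const_mul_self (δ ^ (-(2 * Y))) (fun v : ℝ => v ^ (-(2 * Y))) _).congr' ?_ .rfl
    filter_upwards [eventually_gt_atTop 0] with v hv
    rw [← Real.mul_rpow hδ.le hv.le, ← Real.rpow_add (mul_pos hδ hv), two_mul, neg_add]
  refine ((((hU_tail.comp_tendsto h_scale).mul (hV_tail.comp_tendsto h_scale)).congr_left
    fun v => (h_prod v).symm).trans h_rpow).trans (isBigO_rpow_rpow_atTop_of_le (by linarith))

variable [IsProbabilityMeasure P]

lemma integrable_and_measureReal_eq_integral_of_indepFun (hX : Measurable X) (hV : Measurable V)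
    (hXV : IndepFun X V P) (p : ℝ → ℝ → Prop) (hp : MeasurableSet {q : ℝ × ℝ | p q.1 q.2}) :
    Integrable (fun ω => P.real {ω' | p (X ω') (V ω)}) P ∧
      P.real {ω | p (X ω) (V ω)} = ∫ ω, P.real {ω' | p (X ω') (V ω)} ∂P := by
  set S := {q : ℝ × ℝ | p q.1 q.2}
  have : IsProbabilityMeasure (P.map X) := Measure.isProbabilityMeasure_map hX.aemeasurable
  have : IsProbabilityMeasure (P.map V) := Measure.isProbabilityMeasure_map hV.aemeasurable
  have h_section : ∀ y, P.real {ω' | p (X ω') y} = (P.map X).real ((fun x => (x, y)) ⁻¹' S) :=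
    fun y => (map_measureReal_apply hX (measurable_prodMk_right hp)).symm
  have h_meas := (measurable_measure_prodMk_right (μ := P.map X) hp).ennreal_toReal
  have h_joint : P.real {ω | p (X ω) (V ω)} = ((P.map X).prod (P.map V)).real S := by
    rw [← (indepFun_iff_map_prod_eq_prod_map_map hX.aemeasurable hV.aemeasurable).mp hXV,
      map_measureReal_apply (hX.prodMk hV) hp]
    rfl
  simp only [h_section]
  refine ⟨.of_bound (h_meas.comp hV).aestronglyMeasurable 1 (.of_forall fun ω => ?_), ?_⟩
  · exact (Real.norm_of_nonneg measureReal_nonneg).trans_le measureReal_le_one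
  · rw [← integral_map (f := fun y => (P.map X).real ((fun x => (x, y)) ⁻¹' S)) hV.aemeasurable
      h_meas.aestronglyMeasurable, h_joint, measureReal_def, Measure.prod_apply_symm hp]
    exact (integral_toReal (measurable_measure_prodMk_right hp).aemeasurable
      (.of_forall fun y => measure_lt_top _ _)).symm

lemma HasPowerTail.truncated_add_of_indepFun (hX : HasPowerTail P X c Y) (hY : 0 < Y)
    (hX_meas : Measurable X) (hV_meas : Measurable V) (hXV : IndepFun X V P)
    (hV : Integrable V P) (hδ : 0 < δ) (hbδ : |b| * δ ≤ 1 / 4) :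
    (fun v => P.real {ω | |V ω| ≤ δ * v ∧ v ≤ X ω + (b * V ω + γ)} - c * v ^ (-Y))
      =O[atTop] fun v => v ^ (-(Y + 1)) := by
  obtain ⟨K, hK⟩ := hX.exists_abs_truncated_sub_le (γ := γ) hY hδ hbδ
  have h_int : Integrable (fun ω => K * (1 + |V ω|)) P :=
    ((integrable_const 1).add hV.norm).const_mul K
  refine .of_bound (∫ ω, K * (1 + |V ω|) ∂P) ?_
  filter_upwards [hK, eventually_gt_atTop 0] with v hKv hv
  have h_meas : MeasurableSet {q : ℝ × ℝ | |q.2| ≤ δ * v ∧ v ≤ q.1 + (b * q.2 + γ)} := by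
    measurability
  obtain ⟨h_int_section, h_fubini⟩ :=
    integrable_and_measureReal_eq_integral_of_indepFun hX_meas hV_meas hXV
      (fun x y => |y| ≤ δ * v ∧ v ≤ x + (b * y + γ)) h_meas
  have h_sub : P.real {ω | |V ω| ≤ δ * v ∧ v ≤ X ω + (b * V ω + γ)} - c * v ^ (-Y) =
      ∫ ω, (P.real {ω' | |V ω| ≤ δ * v ∧ v ≤ X ω' + (b * V ω + γ)} - c * v ^ (-Y)) ∂P := by
    rw [integral_sub h_int_section (integrable_const _), integral_const, probReal_univ, one_smul,
      h_fubini]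
  rw [h_sub, Real.norm_of_nonneg (Real.rpow_nonneg hv.le _), ← integral_mul_const]
  exact norm_integral_le_of_norm_le (h_int.mul_const _) (.of_forall fun ω => hKv (V ω))

lemma abs_measureReal_sub_add_le {A B S₁ S₂ : Set Ω} (hS₂ : MeasurableSet S₂)
    (h_disj : Disjoint S₁ S₂) (h_sub : S₁ ∪ S₂ ⊆ A) (h_sup : A ⊆ S₁ ∪ S₂ ∪ B) :
    |P.real A - (P.real S₁ + P.real S₂)| ≤ P.real B := by
  rw [← measureReal_union h_disj hS₂, abs_of_nonneg (sub_nonneg.mpr (measureReal_mono h_sub)),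
    sub_le_iff_le_add']
  exact (measureReal_mono h_sup).trans (measureReal_union_le _ _)

theorem HasPowerTail.of_big_jump (hU : HasPowerTail P U c Y) (hV : HasPowerTail P V c' Y)
    (hY : 1 < Y) (hU_meas : Measurable U) (hV_meas : Measurable V) (hUV : IndepFun U V P)
    (hU_tail : (fun r => P.real {ω | r < |U ω|}) =O[atTop] fun r => r ^ (-Y))
    (hV_tail : (fun r => P.real {ω | r < |V ω|}) =O[atTop] fun r => r ^ (-Y))
    (ha : 0 < a) (ha' : 0 < a') (hδ : 0 < δ) (hbδ : |b| * δ ≤ 1 / 4) (hbδ' : |b'| * δ ≤ 1 / 4)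
    (h_jumpU : ∀ᶠ v in atTop, ∀ ω, |V ω| ≤ δ * v →
      (v ≤ T ω ↔ v ≤ a * U ω + (b * V ω + γ)))
    (h_jumpV : ∀ᶠ v in atTop, ∀ ω, |U ω| ≤ δ * v →
      (v ≤ T ω ↔ v ≤ a' * V ω + (b' * U ω + γ')))
    (h_noJump : ∀ᶠ v in atTop, ∀ ω, |U ω| ≤ δ * v → |V ω| ≤ δ * v → T ω < v) :
    HasPowerTail P T (c * a ^ Y + c' * a' ^ Y) Y := by
  have hY_pos : 0 < Y := by linarith
  have h_pieceU := (hU.const_mul ha).truncated_add_of_indepFun (γ := γ) hY_pos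
    (hU_meas.const_mul a) hV_meas (hUV.comp (measurable_const_mul a) measurable_id)
    (integrable_of_measureReal_abs_gt_isBigO hV_meas.aemeasurable hY hV_tail) hδ hbδ
  have h_pieceV := (hV.const_mul ha').truncated_add_of_indepFun (γ := γ') hY_pos
    (hV_meas.const_mul a') hU_meas (hUV.symm.comp (measurable_const_mul a') measurable_id)
    (integrable_of_measureReal_abs_gt_isBigO hU_meas.aemeasurable hY hU_tail) hδ hbδ'
  have h_rest : (fun v => P.real {ω | v ≤ T ω} -
      (P.real {ω | |V ω| ≤ δ * v ∧ v ≤ a * U ω + (b * V ω + γ)} +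
        P.real {ω | |U ω| ≤ δ * v ∧ v ≤ a' * V ω + (b' * U ω + γ')}))
      =O[atTop] fun v => v ^ (-(Y + 1)) := by
    refine .trans (.of_norm_eventuallyLE ?_)
      (measureReal_both_large_isBigO_of_indepFun hUV hδ hY.le hU_tail hV_tail)
    filter_upwards [h_jumpU, h_jumpV, h_noJump] with v hvU hvV hv
    refine abs_measureReal_sub_add_le ?_ ?_ ?_ ?_
    · measurability
    · rw [disjoint_left]
      exact fun ω hωU hωV => (hv ω hωV.1 hωU.1).not_ge ((hvV ω hωV.1).mpr hωV.2)
    · exact union_subset (fun ω hω => (hvU ω hω.1).mpr hω.2) fun ω hω => (hvV ω hω.1).mpr hω.2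
    · intro ω hω
      by_cases hV_small : |V ω| ≤ δ * v
      · exact .inl (.inl ⟨hV_small, (hvU ω hV_small).mp hω⟩)
      by_cases hU_small : |U ω| ≤ δ * v
      · exact .inl (.inr ⟨hU_small, (hvV ω hU_small).mp hω⟩)
      · exact .inr ⟨not_le.mp hU_small, not_le.mp hV_small⟩
  exact (h_rest.add (h_pieceU.add h_pieceV)).congr_left fun v => by ring

theorem hasPowerTail_posPart_sub_add (hU : HasPowerTail P U c Y) (hV : HasPowerTail P V c' Y)
    (hY : 1 < Y) (hU_meas : Measurable U) (hV_meas : Measurable V) (hUV : IndepFun U V P)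
    (hU_tail : (fun r => P.real {ω | r < |U ω|}) =O[atTop] fun r => r ^ (-Y))
    (hV_tail : (fun r => P.real {ω | r < |V ω|}) =O[atTop] fun r => r ^ (-Y))
    {M G : ℝ} (hM : 1 ≤ M) (hG : 0 ≤ G) (γ : ℝ) :
    HasPowerTail P (fun ω => max (U ω - V ω + γ) 0 + ((M - 1) * U ω + (G + 1) * V ω))
      (c * M ^ Y + c' * (G + 1) ^ Y) Y := by
  have hδD : (M + G + 1) * (4 * (M + G + 1))⁻¹ = 1 / 4 := by field_simp
  have hδ : 0 < (4 * (M + G + 1))⁻¹ := by positivity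
  generalize (4 * (M + G + 1))⁻¹ = δ at hδ hδD
  have h_large : ∀ᶠ v in atTop, 0 < δ * v ∧ |γ| ≤ δ * v :=
    have h_tendsto := tendsto_id.const_mul_atTop hδ
    (h_tendsto.eventually_gt_atTop 0).and (h_tendsto.eventually_ge_atTop |γ|)
  have h_scale : ∀ v, v = 4 * (M + G + 1) * (δ * v) := fun v => by linear_combination -4 * v * hδD
  have h_max : ∀ x y, max (x - y + γ) 0 + ((M - 1) * x + (G + 1) * y) =
      max (M * x + (G * y + γ)) ((G + 1) * y + ((M - 1) * x + 0)) := fun x y => by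
    rw [← max_add_add_right]
    congr 1 <;> ring
  simp only [h_max]
  refine hU.of_big_jump (a := M) (a' := G + 1) (b := G) (b' := M - 1) (γ := γ) (γ' := 0)
    hV hY hU_meas hV_meas hUV hU_tail hV_tail (by linarith) (by linarith) hδ ?_ ?_ ?_ ?_ ?_
  · rw [abs_of_nonneg hG]
    nlinarith
  · rw [abs_of_nonneg (by linarith)]
    nlinarith
  · filter_upwards [h_large] with v ⟨hδv, hγ⟩ ω hω
    rw [le_max_iff, or_iff_left_of_imp]
    intro hv
    by_contra! hlt
    have := h_scale v
    have h_U : U ω ≤ 2 * (δ * v) := by linarith [neg_abs_le γ, le_abs_self (V ω)]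
    nlinarith [le_abs_self (V ω), mul_le_mul_of_nonneg_left h_U (sub_nonneg.mpr hM)]
  · filter_upwards [h_large] with v ⟨hδv, hγ⟩ ω hω
    rw [le_max_iff, or_iff_right_of_imp]
    intro hv
    by_contra! hlt
    have := h_scale v
    have h_V : V ω ≤ 2 * (δ * v) := by linarith [le_abs_self γ, le_abs_self (U ω)]
    nlinarith [le_abs_self (U ω), le_abs_self γ, mul_le_mul_of_nonneg_left h_V hG]
  · filter_upwards [h_large] with v ⟨hδv, hγ⟩ ω hωU hωV
    have := h_scale v
    have := le_abs_self (U ω)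
    have := le_abs_self (V ω)
    have := le_abs_self γ
    rw [max_lt_iff]
    constructor <;> nlinarith

end BigJump

section TailLimit

variable {ι Ω : Type*} [MeasurableSpace Ω] {P : Measure Ω} {X X₀ L H : Ω → ℝ} {c s v Y : ℝ}

lemma antitone_measureReal_le [IsFiniteMeasure P] (X : Ω → ℝ) :
    Antitone fun v => P.real {ω | v ≤ X ω} :=
  fun _ _ hvw => measureReal_mono fun _ hω => hvw.trans hω

lemma locallyIntegrable_rpow {p : ℝ} (hp : -1 < p) : LocallyIntegrable fun x : ℝ => x ^ p := by
  refine locallyIntegrable_iff.mpr fun K hK => ?_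
  obtain ⟨R, hR⟩ := hK.isBounded.subset_closedBall 0
  rw [Real.closedBall_eq_Icc] at hR
  refine IntegrableOn.mono_set ?_ (hR.trans Icc_subset_uIcc)
  exact (intervalIntegrable_iff' (by finiteness)).mp (intervalIntegral.intervalIntegrable_rpow' hp)

lemma HasPowerTail.integrableOn_mul_sub [IsFiniteMeasure P] (h : HasPowerTail P X c Y)
    (hY : Y ∈ Ioo (1 : ℝ) 2) :
    IntegrableOn (fun v => v * (P.real {ω | v ≤ X ω} - c * v ^ (-Y))) (Ioi 0) := by
  have h_expand : EqOn (fun v => v * P.real {ω | v ≤ X ω} - c * v ^ (1 - Y))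
      (fun v => v * (P.real {ω | v ≤ X ω} - c * v ^ (-Y))) (Ioi 0) := fun v (hv : 0 < v) => by
    simp only [sub_eq_add_neg 1 Y, Real.rpow_add hv, Real.rpow_one]
    ring
  have h_loc : LocallyIntegrable fun v => v * P.real {ω | v ≤ X ω} - c * v ^ (1 - Y) := by
    refine .sub ?_ ((locallyIntegrable_rpow (by linarith [hY.2])).smul c)
    simpa [smul_eq_mul] using
      (antitone_measureReal_le (P := P) X).locallyIntegrable.continuous_smul continuous_id
  have h_decay : (fun v => v * P.real {ω | v ≤ X ω} - c * v ^ (1 - Y)) =O[atTop]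
      fun v => v ^ (-Y) := by
    refine ((isBigO_refl (fun v : ℝ => v) atTop).mul h).congr' ?_ ?_ <;>
      filter_upwards [eventually_gt_atTop 0] with v hv
    · exact (h_expand hv).symm
    · rw [neg_add', Real.rpow_sub_one hv.ne', mul_div_cancel₀ _ hv.ne']
  exact (((h_loc.locallyIntegrableOn (Ici 0)).integrableOn_of_isBigO_atTop h_decay
    (integrableAtFilter_rpow_atTop_iff.mpr (neg_lt_neg hY.1))).mono_set
    Ioi_subset_Ici_self).congr_fun h_expand measurableSet_Ioi

lemma abs_exp_neg_mul_sub_one_div_le (hs : 0 < s) (hv : 0 ≤ v) :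
    |(Real.exp (-(s * v)) - 1) / s| ≤ v := by
  rw [abs_div, abs_of_pos hs, div_le_iff₀' hs, abs_sub_comm,
    abs_of_nonneg (sub_nonneg.mpr (Real.exp_le_one_iff.mpr (by nlinarith)))]
  linarith [Real.add_one_le_exp (-(s * v))]

lemma tendsto_exp_neg_mul_sub_one_div (v : ℝ) :
    Tendsto (fun s : ℝ => (Real.exp (-(s * v)) - 1) / s) (𝓝[>] 0) (𝓝 (-v)) := by
  have h_deriv : HasDerivAt (fun s : ℝ => Real.exp (-(s * v))) (-v) 0 := by
    simpa using ((hasDerivAt_id (0 : ℝ)).mul_const v).neg.exp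
  simpa [div_eq_inv_mul] using h_deriv.tendsto_slope_zero_right

lemma ae_tendsto_measureReal_le [IsFiniteMeasure P] {l : Filter ι} [l.IsCountablyGenerated]
    {X : ι → Ω → ℝ} (hX : ∀ i, Measurable (X i)) (hX₀ : Measurable X₀)
    (h_lim : ∀ ω, Tendsto (fun i => X i ω) l (𝓝 (X₀ ω))) :
    ∀ᵐ v : ℝ, Tendsto (fun i => P.real {ω | v ≤ X i ω}) l (𝓝 (P.real {ω | v ≤ X₀ ω})) := by
  filter_upwards [(Measure.countable_meas_level_set_pos (μ := P) hX₀).ae_notMem volume] with v hv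
  have h_ne : ∀ᵐ ω ∂P, X₀ ω ≠ v :=
    measure_eq_zero_iff_ae_notMem.mp (nonpos_iff_eq_zero.mp (not_lt.mp hv))
  refine (ENNReal.tendsto_toReal (measure_ne_top P _)).comp
    (tendsto_measure_of_ae_tendsto_indicator_of_isFiniteMeasure l
      (measurableSet_le measurable_const hX₀)
      (fun i => measurableSet_le measurable_const (hX i)) ?_)
  filter_upwards [h_ne] with ω hω
  rcases hω.lt_or_gt with h_lt | h_gt
  · filter_upwards [(h_lim ω).eventually_lt_const h_lt] with i hi
    exact iff_of_false hi.not_ge h_lt.not_ge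
  · filter_upwards [(h_lim ω).eventually_const_lt h_gt] with i hi
    exact iff_of_true hi.le h_gt.le

theorem tendsto_integral_exp_neg_mul_sub_one_div_mul_measureReal [IsFiniteMeasure P]
    {l : Filter ι} [l.IsCountablyGenerated] {X : ι → Ω → ℝ} {s : ι → ℝ}
    (hs : Tendsto s l (𝓝[>] 0)) (hX : ∀ i, Measurable (X i)) (hX₀ : Measurable X₀)
    (h_lim : ∀ ω, Tendsto (fun i => X i ω) l (𝓝 (X₀ ω)))
    (h_lower : ∀ᶠ i in l, ∀ ω, L ω ≤ X i ω) (h_upper : ∀ᶠ i in l, ∀ ω, X i ω ≤ H ω)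
    (hL : HasPowerTail P L c Y) (hH : HasPowerTail P H c Y) (hY : Y ∈ Ioo (1 : ℝ) 2) :
    Tendsto (fun i => ∫ v in Ioi (0 : ℝ), (Real.exp (-(s i * v)) - 1) / s i *
        (P.real {ω | v ≤ X i ω} - c * v ^ (-Y))) l
      (𝓝 (-∫ v in Ioi (0 : ℝ), v * (P.real {ω | v ≤ X₀ ω} - c * v ^ (-Y)))) := by
  rw [← integral_neg]
  refine tendsto_integral_filter_of_dominated_convergence
    (fun v => ‖v * (P.real {ω | v ≤ L ω} - c * v ^ (-Y))‖ +
      ‖v * (P.real {ω | v ≤ H ω} - c * v ^ (-Y))‖) ?_ ?_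
    ((hL.integrableOn_mul_sub hY).norm.add (hH.integrableOn_mul_sub hY).norm) ?_
  · refine .of_forall fun i => Measurable.aestronglyMeasurable ?_
    have := (antitone_measureReal_le (P := P) (X i)).measurable
    fun_prop
  · filter_upwards [h_lower, h_upper, hs.eventually self_mem_nhdsWithin] with i hLi hHi hsi
    filter_upwards [ae_restrict_mem measurableSet_Ioi] with v hv
    have h_mono_L : P.real {ω | v ≤ L ω} ≤ P.real {ω | v ≤ X i ω} :=
      measureReal_mono fun ω hω => le_trans hω (hLi ω)
    have h_mono_H : P.real {ω | v ≤ X i ω} ≤ P.real {ω | v ≤ H ω} :=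
      measureReal_mono fun ω hω => le_trans hω (hHi ω)
    rw [norm_mul, norm_mul, norm_mul, ← mul_add]
    refine mul_le_mul ((abs_exp_neg_mul_sub_one_div_le hsi hv.le).trans (le_abs_self v)) ?_
      (norm_nonneg _) (norm_nonneg _)
    refine (abs_le_max_abs_abs (sub_le_sub_right h_mono_L _) (sub_le_sub_right h_mono_H _)).trans ?_
    exact max_le_add_of_nonneg (abs_nonneg _) (abs_nonneg _)
  · filter_upwards [ae_restrict_of_ae (ae_tendsto_measureReal_le (P := P) hX hX₀ h_lim)] with v hv
    rw [← neg_mul]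
    exact ((tendsto_exp_neg_mul_sub_one_div v).comp hs).mul (hv.sub_const _)

end TailLimit

section StableRandomVariables

variable {Ω : Type*} [MeasurableSpace Ω] {P : Measure Ω} {U : Ω → ℝ} {C Y : ℝ}

lemma stableExponent_eq_cos_sub_sin (C Y : ℝ) :
    stableExponent C Y = (C * Real.Gamma (-Y) : ℝ) *
      ((Real.cos (Real.pi * Y / 2) : ℝ) - Complex.I * (Real.sin (Real.pi * Y / 2) : ℝ)) := by
  rw [stableExponent, Complex.exp_mul_I, ← Complex.ofReal_cos, ← Complex.ofReal_sin, Real.cos_neg,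
    Real.sin_neg, Complex.ofReal_neg, neg_mul, ← sub_eq_add_neg, mul_comm Complex.I]

lemma IsPositivelySkewedStable.of_integral_exp (hU : AEMeasurable U P) (hY : Y ≠ 0)
    (h : ∀ u : ℝ, (∫ ω, Complex.exp (Complex.I * u * (U ω)) ∂P) =
      Complex.exp (((C * Real.Gamma (-Y) * |u| ^ Y : ℝ) : ℂ) *
        (((Real.cos (Real.pi * Y / 2) : ℝ) : ℂ)
          - Complex.I * ((Real.sign u : ℝ) : ℂ) * ((Real.sin (Real.pi * Y / 2) : ℝ) : ℂ)))) :
    IsPositivelySkewedStable (P.map U) C Y := by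
  intro u hu
  have h_charFun : charFun (P.map U) u = ∫ ω, Complex.exp (Complex.I * u * (U ω)) ∂P := by
    rw [charFun_apply_real, integral_map hU (by fun_prop)]
    simp only [mul_comm Complex.I, mul_right_comm _ Complex.I]
  rw [h_charFun, h, stableExponent_eq_cos_sub_sin]
  congr 1
  rcases hu.eq_or_lt with rfl | hu_pos
  · simp [Real.zero_rpow hY, Complex.zero_cpow (Complex.ofReal_ne_zero.mpr hY)]
  · rw [abs_of_pos hu_pos, Real.sign_of_pos hu_pos, Complex.ofReal_one, mul_one,
      ← Complex.ofReal_cpow hu, Complex.ofReal_mul _ (u ^ Y), mul_right_comm]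

lemma IsPositivelySkewedStable.hasPowerTail [IsProbabilityMeasure P] (hU : Measurable U)
    (h : IsPositivelySkewedStable (P.map U) C Y) (hC : 0 < C) (hY : Y ∈ Ioo (1 : ℝ) 2) :
    HasPowerTail P U (C / Y) Y :=
  .of_map hU (h.hasPowerTail_id hC hY)

lemma IsPositivelySkewedStable.measureReal_abs_gt_isBigO_comp [IsProbabilityMeasure P]
    (hU : Measurable U) (h : IsPositivelySkewedStable (P.map U) C Y) (hC : 0 < C)
    (hY : Y ∈ Ioo (1 : ℝ) 2) :
    (fun r => P.real {ω | r < |U ω|}) =O[atTop] fun r => r ^ (-Y) := by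
  have : IsProbabilityMeasure (P.map U) := Measure.isProbabilityMeasure_map hU.aemeasurable
  refine (h.measureReal_abs_gt_isBigO hC hY).congr_left fun r => ?_
  exact map_measureReal_apply hU (measurableSet_lt measurable_const measurable_norm)

lemma tendsto_rpow_nhdsGT_zero {p : ℝ} (hp : 0 < p) :
    Tendsto (fun t : ℝ => t ^ p) (𝓝[>] 0) (𝓝[>] 0) := by
  refine tendsto_nhdsWithin_iff.mpr ⟨?_, ?_⟩
  · simpa [Real.zero_rpow hp.ne'] using
      (Real.continuousAt_rpow_const 0 p (.inr hp.le)).tendsto.mono_left nhdsWithin_le_nhds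
  · filter_upwards [self_mem_nhdsWithin] with t ht using Real.rpow_pos_of_pos ht p

lemma tendsto_rpow_mul_const_sub_div {p : ℝ} (hp : 0 < p) {κ : ℝ → ℝ} {e₁ e₂ : ℝ} (g : ℝ)
    (hκ : (fun t => κ t - (e₁ * t + e₂ * t ^ (1 + p))) =o[𝓝[>] (0 : ℝ)] fun t => t ^ (1 + p)) :
    Tendsto (fun t : ℝ => t ^ p * (g - κ t / t)) (𝓝[>] 0) (𝓝 0) := by
  have h_rpow : Tendsto (fun t : ℝ => t ^ p) (𝓝[>] 0) (𝓝 0) :=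
    tendsto_nhds_of_tendsto_nhdsWithin (tendsto_rpow_nhdsGT_zero hp)
  have h_main := h_rpow.mul (((tendsto_const_nhds (x := g - e₁)).sub (h_rpow.const_mul e₂)).sub
    (h_rpow.mul hκ.tendsto_div_nhds_zero))
  rw [zero_mul] at h_main
  refine h_main.congr' ?_
  filter_upwards [self_mem_nhdsWithin] with t (ht : 0 < t)
  rw [Real.rpow_add ht, Real.rpow_one]
  field_simp
  ring

end StableRandomVariables

theorem stmt18_general {ι Ω : Type*} [MeasurableSpace Ω] {P : Measure Ω} [IsProbabilityMeasure P]
    {Y C C' M G : ℝ} (hY : Y ∈ Ioo (1 : ℝ) 2) (hC : 0 < C) (hC' : 0 < C') (hM : 1 ≤ M)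
    (hG : 0 ≤ G) {U V : Ω → ℝ} (hU : Measurable U) (hV : Measurable V) (hUV : IndepFun U V P)
    (hU_stable : IsPositivelySkewedStable (P.map U) C Y)
    (hV_stable : IsPositivelySkewedStable (P.map V) C' Y)
    {l : Filter ι} [l.IsCountablyGenerated] {s γ : ι → ℝ} (hs : Tendsto s l (𝓝[>] 0))
    (hγ : Tendsto γ l (𝓝 0)) :
    Tendsto (fun i => ∫ v in Ioi (0 : ℝ), (Real.exp (-(s i * v)) - 1) / s i *
        (P.real {ω | v ≤ max (U ω - V ω + γ i) 0 + ((M - 1) * U ω + (G + 1) * V ω)}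
          - (C * M ^ Y + C' * (G + 1) ^ Y) / (Y * v ^ Y))) l
      (𝓝 (-∫ v in Ioi (0 : ℝ),
        v * (P.real {ω | v ≤ max (U ω - V ω) 0 + ((M - 1) * U ω + (G + 1) * V ω)}
          - C * M ^ Y / (Y * v ^ Y) - C' * (G + 1) ^ Y / (Y * v ^ Y)))) := by
  have h_tail := hasPowerTail_posPart_sub_add (hU_stable.hasPowerTail hU hC hY)
    (hV_stable.hasPowerTail hV hC' hY) hY.1 hU hV hUV
    (hU_stable.measureReal_abs_gt_isBigO_comp hU hC hY)
    (hV_stable.measureReal_abs_gt_isBigO_comp hV hC' hY) hM hG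
  have hγ_le : ∀ᶠ i in l, |γ i| ≤ 1 := by
    simpa using hγ.abs.eventually_le_const (by simp : |(0 : ℝ)| < 1)
  have h_const : ∀ v ∈ Ioi (0 : ℝ), (C / Y * M ^ Y + C' / Y * (G + 1) ^ Y) * v ^ (-Y) =
      (C * M ^ Y + C' * (G + 1) ^ Y) / (Y * v ^ Y) := fun v (hv : 0 < v) => by
    rw [Real.rpow_neg hv.le]
    field_simp
  have h_meas : ∀ g : ℝ, Measurable fun ω =>
      max (U ω - V ω + g) 0 + ((M - 1) * U ω + (G + 1) * V ω) := fun g => by fun_prop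
  have h_lim := tendsto_integral_exp_neg_mul_sub_one_div_mul_measureReal hs
    (fun i => h_meas (γ i)) (h_meas 0)
    (fun ω => ((hγ.const_add (U ω - V ω)).max tendsto_const_nhds).add_const _)
    (hγ_le.mono fun i hi ω => by gcongr; exact (abs_le.mp hi).1)
    (hγ_le.mono fun i hi ω => by gcongr; exact (abs_le.mp hi).2)
    (h_tail (-1)) (h_tail 1) hY
  convert h_lim using 2 with i
  · refine setIntegral_congr_fun measurableSet_Ioi fun v hv => ?_
    simp only [h_const v hv]
  · refine congrArg Neg.neg (setIntegral_congr_fun measurableSet_Ioi fun v hv => ?_)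
    simp only [h_const v hv, add_zero, add_div, sub_sub]

/-- Key limit for the positive-exponential part (display (NdTp1)). -/
theorem stmt18
    {Ω : Type} [MeasurableSpace Ω] (P : Measure Ω) [IsProbabilityMeasure P]
    (Y C M G : ℝ) (hY : Y ∈ Set.Ioo (1:ℝ) 2) (hC : 0 < C) (hM : 1 < M) (hG : 0 < G)
    (U V : Ω → ℝ) (hU : Measurable U) (hV : Measurable V)
    (hIndep : IndepFun U V P)
    (hUchar : ∀ u : ℝ, (∫ ω, Complex.exp (Complex.I * u * (U ω)) ∂P) =
      Complex.exp (((C * Real.Gamma (-Y) * |u| ^ Y : ℝ) : ℂ) *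
        (((Real.cos (Real.pi * Y / 2) : ℝ) : ℂ)
          - Complex.I * ((Real.sign u : ℝ) : ℂ) * ((Real.sin (Real.pi * Y / 2) : ℝ) : ℂ))))
    (hVchar : ∀ u : ℝ, (∫ ω, Complex.exp (Complex.I * u * (V ω)) ∂P) =
      Complex.exp (((C * Real.Gamma (-Y) * |u| ^ Y : ℝ) : ℂ) *
        (((Real.cos (Real.pi * Y / 2) : ℝ) : ℂ)
          - Complex.I * ((Real.sign u : ℝ) : ℂ) * ((Real.sin (Real.pi * Y / 2) : ℝ) : ℂ))))
    (Z Ut : Ω → ℝ)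
    (hZ : Z = fun ω => U ω - V ω)
    (hUt : Ut = fun ω => (M - 1) * U ω + (G + 1) * V ω)
    (κ : ℝ → ℝ) (e₁ e₂ : ℝ)
    (hκ : (fun t => κ t - (e₁ * t + e₂ * t ^ (2 - 1/Y))) =o[𝓝[>] (0:ℝ)]
      fun t => t ^ (2 - 1/Y))
    (γ' : ℝ)
    (hγ' : γ' = -C * Real.Gamma (-Y) * ((M-1) ^ Y + (G+1) ^ Y - M ^ Y - G ^ Y))
    (γt : ℝ → ℝ)
    (hγt : ∀ t, γt t = t ^ (1 - 1/Y) * (γ' - κ t / t)) :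
    Filter.Tendsto
      (fun t => ∫ v in Set.Ioi (0:ℝ),
        ((Real.exp (-(t ^ (1/Y) * v)) - 1) / t ^ (1/Y)) *
          ((P {ω | v ≤ max (Z ω + γt t) 0 + Ut ω}).toReal
            - C * (M ^ Y + (G+1) ^ Y) / (Y * v ^ Y)))
      (𝓝[>] (0:ℝ))
      (𝓝 (-∫ v in Set.Ioi (0:ℝ),
        v * ((P {ω | v ≤ max (Z ω) 0 + Ut ω}).toReal
          - C * M ^ Y / (Y * v ^ Y) - C * (G+1) ^ Y / (Y * v ^ Y)))) := by
  have hY_pos : 0 < Y := by linarith [hY.1]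
  rw [show 2 - 1 / Y = 1 + (1 - 1 / Y) by ring] at hκ
  have hγt_lim : Tendsto γt (𝓝[>] 0) (𝓝 0) :=
    funext hγt ▸ tendsto_rpow_mul_const_sub_div (sub_pos.mpr ((div_lt_one hY_pos).mpr hY.1)) γ' hκ
  subst hZ hUt
  simpa only [mul_add, measureReal_def] using stmt18_general hY hC hC hM.le hG.le hU hV hIndep
    (.of_integral_exp hU.aemeasurable hY_pos.ne' hUchar)
    (.of_integral_exp hV.aemeasurable hY_pos.ne' hVchar)
    (tendsto_rpow_nhdsGT_zero (one_div_pos.mpr hY_pos)) hγt_lim
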